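/- arXiv:2407.01341 — 2 statements merged into one kernel-verified Lean document; each statement's English description precedes it below -/
import Mathlib

section
/- There exists an absolute constant K > 0 such that the following holds. Let ψ ∈ 𝒜(I_π) be of the form ψ = f + g/2, where f ∈ 𝒜(I_π) with dom(f) = I_d ⊆ I_π, and g = −(log h)' on I_d for some (1/m)-concave function h which is affine on an interval [a,b] with I_{π/4} ⊆ [a,b] ⊆ I_d. If λ₁(I_d, 2ψ') ≤ 15, then λ₁(I_d, 2ψ') ≥ 4 + (16K/(mπ²)) · [1 − min{h(a),h(b)}/max{h(a),h(b)}]². -/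
open MeasureTheory Real Set Filter
open scoped ENNReal

noncomputable section

/-- Test class for the Dirichlet eigenvalue with measure potential on `(a,b)`:
`C¹` functions vanishing outside the open interval (a core of `H¹₀`). -/
def TestFun (a b : ℝ) (v : ℝ → ℝ) : Prop :=
  ContDiff ℝ 1 v ∧ ∀ x ∉ Ioo a b, v x = 0

/-- Rayleigh quotient for the Dirichlet eigenvalue with (nonnegative, possibly infinite)
measure potential `q` on the interval `(a,b)`. -/
def dirRQ (a b : ℝ) (q : Measure ℝ) (v : ℝ → ℝ) : ℝ≥0∞ :=
  ((∫⁻ x in Ioo a b, ENNReal.ofReal ((deriv v x) ^ 2)) +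
      ∫⁻ x in Ioo a b, ENNReal.ofReal ((v x) ^ 2) ∂q) /
    ∫⁻ x in Ioo a b, ENNReal.ofReal ((v x) ^ 2)

/-- `λ₁((a,b), q)`, the first Dirichlet eigenvalue with measure potential `q`. -/
def lam1 (a b : ℝ) (q : Measure ℝ) : ℝ≥0∞ :=
  ⨅ (v : ℝ → ℝ)
    (_ : TestFun a b v ∧ (∫⁻ x in Ioo a b, ENNReal.ofReal ((v x) ^ 2)) ≠ 0),
    dirRQ a b q v

/-- The class `𝒜(I_π)`: an increasing function `psi` with finiteness domain `dom ⊆ I_π`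
(an interval), satisfying the improved-monotonicity gap condition, together with the
measure `nu` representing its distributional derivative `ψ'` on `dom`. -/
structure PsiA where
  dom : Set ℝ
  domSub : dom ⊆ Ioo (-(π / 2)) (π / 2)
  domConn : dom.OrdConnected
  psi : ℝ → ℝ
  mono : MonotoneOn psi dom
  gap : ∀ ⦃x⦄, x ∈ dom → ∀ ⦃y⦄, y ∈ dom → x < y →
    2 * tan ((y - x) / 2) ≤ psi y - psi x
  nu : Measure ℝ
  nu_eq : ∀ ⦃x⦄, x ∈ dom → ∀ ⦃y⦄, y ∈ dom → x ≤ y →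
    nu (Ioc x y) = ENNReal.ofReal (psi y - psi x)

/-- The measure `ψ'`, extended by `+∞` on `I_π \ dom ψ`. -/
def PsiA.derivM (P : PsiA) : Measure ℝ :=
  P.nu.restrict P.dom + (∞ : ℝ≥0∞) • volume.restrict (Ioo (-(π / 2)) (π / 2) \ P.dom)

/-- The measure `ψ² dx`, extended by `+∞` on `I_π \ dom ψ`. -/
def PsiA.sqM (P : PsiA) : Measure ℝ :=
  (volume.restrict P.dom).withDensity (fun x => ENNReal.ofReal ((P.psi x) ^ 2)) +
    (∞ : ℝ≥0∞) • volume.restrict (Ioo (-(π / 2)) (π / 2) \ P.dom)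

/-- The measure `q = ψ' + ψ²`, extended by `+∞` on `I_π \ dom ψ`. -/
def PsiA.qM (P : PsiA) : Measure ℝ :=
  P.nu.restrict P.dom +
    (volume.restrict P.dom).withDensity (fun x => ENNReal.ofReal ((P.psi x) ^ 2)) +
    (∞ : ℝ≥0∞) • volume.restrict (Ioo (-(π / 2)) (π / 2) \ P.dom)

/-- The function `cos² x` on `I_π`, extended by zero. -/
def cosSq : ℝ → ℝ := fun x => if x ∈ Ioo (-(π / 2)) (π / 2) then cos x ^ 2 else 0

/-- The measure with density `1 + 2 tan² x` on `I_π`. -/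
def tanWeight : Measure ℝ :=
  (volume.restrict (Ioo (-(π / 2)) (π / 2))).withDensity
    fun x => ENNReal.ofReal (1 + 2 * tan x ^ 2)


lemma aux_tan_add {x y : ℝ} (hx : 0 ≤ x) (hy : 0 ≤ y) (hxy : x + y < π / 2) :
    tan x + tan y ≤ tan (x + y) := by
  have hcx : 0 < cos x := cos_pos_of_mem_Ioo ⟨by linarith [pi_pos], by linarith⟩
  have hcy : 0 < cos y := cos_pos_of_mem_Ioo ⟨by linarith [pi_pos], by linarith⟩
  have hc : 0 < cos (x + y) := cos_pos_of_mem_Ioo ⟨by linarith [pi_pos], by linarith⟩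
  have hsx : 0 ≤ sin x := sin_nonneg_of_nonneg_of_le_pi hx (by linarith)
  have hsy : 0 ≤ sin y := sin_nonneg_of_nonneg_of_le_pi hy (by linarith)
  have hs : 0 ≤ sin (x + y) := sin_nonneg_of_nonneg_of_le_pi (by linarith) (by linarith)
  have e : tan x + tan y = sin (x + y) / (cos x * cos y) := by
    rw [tan_eq_sin_div_cos, tan_eq_sin_div_cos, sin_add]; field_simp
  rw [e, tan_eq_sin_div_cos]
  apply div_le_div_of_nonneg_left hs hc
  rw [cos_add]; nlinarith [mul_nonneg hsx hsy]

/-- The one-variable calculus behind the trapezoid step. -/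
lemma aux_calc {γ γ' r l : ℝ} (hr : 0 < r) (hγ : 0 ≤ γ) (hγγ : γ ≤ γ')
    (hl : l < π) (hl' : 0 ≤ l - r * (γ' - γ)) :
    8 * tan ((l - r * (γ' - γ)) / 2) * γ' ^ 2 - 4 * γ' / r + 4 * r * γ' ^ 3 / 3
      - (8 * tan (l / 2) * γ ^ 2 - 4 * γ / r + 4 * r * γ ^ 3 / 3) ≤
    ∫ t in (0:ℝ)..(γ' - γ), 4 * (tan ((l - r * t) / 2) * (2 * (t + γ))) := by
  have hpos : ∀ t ∈ Icc 0 (γ' - γ), 0 < cos ((l - r * t) / 2) := by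
    intro t ht
    apply cos_pos_of_mem_Ioo
    have : r * t ≤ r * (γ' - γ) := by gcongr; exact ht.2
    have : 0 ≤ r * t := mul_nonneg hr.le ht.1
    constructor <;> linarith [pi_pos]
  set Ψ : ℝ → ℝ := fun t => 8 * tan ((l - r * t) / 2) * (t + γ) ^ 2 - 4 * (t + γ) / r
    + 4 * r * (t + γ) ^ 3 / 3 with hΨ
  set Ψ' : ℝ → ℝ := fun t => 8 * (1 / cos ((l - r * t) / 2) ^ 2 * (-r / 2)) * (t + γ) ^ 2
    + 8 * tan ((l - r * t) / 2) * (2 * (t + γ)) - 4 / r + 4 * r * (t + γ) ^ 2 with hΨ'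
  have hd : ∀ t ∈ Icc 0 (γ' - γ), HasDerivAt Ψ (Ψ' t) t := by
    intro t ht
    have h1 : HasDerivAt (fun t : ℝ => (l - r * t) / 2) (-r / 2) t := by
      have := (((hasDerivAt_id t).const_mul r).const_sub l).div_const 2
      simpa using this
    have h2 := (hasDerivAt_tan (hpos t ht).ne').comp t h1
    have h3 : HasDerivAt (fun t : ℝ => t + γ) 1 t := (hasDerivAt_id t).add_const γ
    have := (((h2.const_mul 8).mul (h3.pow 2)).sub ((h3.const_mul 4).div_const r)).add
      (((h3.pow 3).const_mul (4 * r)).div_const 3)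
    refine this.congr_deriv ?_
    simp only [hΨ', Function.comp, Pi.pow_apply]
    norm_num
    ring
  have hcont : ContinuousOn (fun t => tan ((l - r * t) / 2)) (Icc 0 (γ' - γ)) := by
    apply ContinuousOn.comp (t := {x | cos x ≠ 0}) continuousOn_tan (by fun_prop)
    intro t ht; exact (hpos t ht).ne'
  have hcos : ContinuousOn (fun t => 1 / cos ((l - r * t) / 2) ^ 2) (Icc 0 (γ' - γ)) := by
    apply ContinuousOn.div (by fun_prop) (by fun_prop)
    intro t ht; have := hpos t ht; positivity
  have hc' : ContinuousOn Ψ' (Icc 0 (γ' - γ)) := by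
    simp only [hΨ']; fun_prop
  have h0 : 0 ≤ γ' - γ := by linarith
  have hIntg := intervalIntegral.integral_eq_sub_of_hasDerivAt (f := Ψ) (f' := Ψ') (a := 0)
    (b := γ' - γ) (by rw [uIcc_of_le h0]; exact hd)
    (by apply ContinuousOn.intervalIntegrable; rwa [uIcc_of_le h0])
  have e : Ψ (γ' - γ) - Ψ 0 = 8 * tan ((l - r * (γ' - γ)) / 2) * γ' ^ 2 - 4 * γ' / r + 4 * r * γ' ^ 3 / 3
      - (8 * tan (l / 2) * γ ^ 2 - 4 * γ / r + 4 * r * γ ^ 3 / 3) := by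
    simp [hΨ]
  rw [← e, ← hIntg]
  apply intervalIntegral.integral_mono_on h0
  · apply ContinuousOn.intervalIntegrable; rwa [uIcc_of_le h0]
  · apply ContinuousOn.intervalIntegrable; rw [uIcc_of_le h0]; fun_prop
  · intro t ht
    simp only [hΨ']
    have hc := hpos t ht
    have hs : 1 / cos ((l - r * t) / 2) ^ 2 = 1 + tan ((l - r * t) / 2) ^ 2 := by
      rw [tan_eq_sin_div_cos]; field_simp; linarith [sin_sq_add_cos_sq ((l - r * t) / 2)]
    rw [hs]
    set T := tan ((l - r * t) / 2)
    set s := t + γ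
    have : 4 * (T * (2 * s)) - (8 * ((1 + T ^ 2) * (-r / 2)) * s ^ 2 + 8 * T * (2 * s) - 4 / r + 4 * r * s ^ 2)
       = 4 / r * (1 - r * s * T) ^ 2 := by field_simp; ring
    have h2 : 0 ≤ 4 / r * (1 - r * s * T) ^ 2 := by positivity
    linarith
lemma aux_layer (μ : Measure ℝ) {v : ℝ → ℝ} (hv : Continuous v) {α β γ γ' r1 r2 : ℝ}
    (hγ : 0 ≤ γ) (hγγ : γ ≤ γ') (hr1 : 0 < r1) (hr2 : 0 < r2)
    (hle : α + r1 * (γ' - γ) ≤ β - r2 * (γ' - γ)) (hl : β - α < π)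
    (hμ : ∀ x y, α ≤ x → x ≤ y → y ≤ β → ENNReal.ofReal (2 * tan ((y - x) / 2)) ≤ μ (Ioc x y))
    (hfin : μ (Ioc α β) ≠ ∞)
    (hvl : ∀ x ∈ Icc α (α + r1 * (γ' - γ)), v x = γ + (x - α) / r1)
    (hvr : ∀ x ∈ Icc (β - r2 * (γ' - γ)) β, v x = γ + (β - x) / r2)
    (hvm : ∀ x ∈ Icc (α + r1 * (γ' - γ)) (β - r2 * (γ' - γ)), γ' ≤ v x) :
    (∫ t in (0:ℝ)..(γ' - γ), 2 * tan (((β - α) - (r1 + r2) * t) / 2) * (2 * (t + γ))) ≤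
      ∫ x in Ioc α β, ((min (v x) γ') ^ 2 - γ ^ 2) ∂μ := by
  have h0 : 0 ≤ γ' - γ := by linarith
  have hpos : ∀ t ∈ Icc 0 (γ' - γ), 0 ≤ ((β - α) - (r1 + r2) * t) / 2 ∧
      ((β - α) - (r1 + r2) * t) / 2 < π / 2 := by
    intro t ht
    have h1 : r1 * t ≤ r1 * (γ' - γ) := by gcongr; exact ht.2
    have h2 : r2 * t ≤ r2 * (γ' - γ) := by gcongr; exact ht.2
    have := mul_nonneg hr1.le ht.1
    have := mul_nonneg hr2.le ht.1
    constructor <;> linarith [pi_pos]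
  have hvγ : ∀ x ∈ Ioc α β, γ ≤ v x := by
    intro x hx
    rcases le_total x (α + r1 * (γ' - γ)) with h | h
    · rw [hvl x ⟨hx.1.le, h⟩]
      have : 0 ≤ (x - α) / r1 := div_nonneg (by linarith [hx.1]) hr1.le
      linarith
    rcases le_total x (β - r2 * (γ' - γ)) with h' | h'
    · exact hγγ.trans (hvm x ⟨h, h'⟩)
    · rw [hvr x ⟨h', hx.2⟩]
      have : 0 ≤ (β - x) / r2 := div_nonneg (by linarith [hx.2]) hr2.le
      linarith
  set F : ℝ → ℝ := fun x => min (v x) γ' - γ with hF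
  have hFc : Continuous F := by fun_prop
  have hFnn : ∀ x ∈ Ioc α β, 0 ≤ F x := fun x hx => by
    simp only [hF]; linarith [le_min (hvγ x hx) hγγ]
  have hlc := lintegral_comp_eq_lintegral_meas_le_mul (μ.restrict (Ioc α β)) (f := F)
    (g := fun t => 2 * (|t| + γ))
    (by filter_upwards [ae_restrict_mem measurableSet_Ioc] with x hx using hFnn x hx)
    hFc.aemeasurable (fun t _ => Continuous.intervalIntegrable (by fun_prop) _ _)
    (by filter_upwards with t; positivity)
  have hk : ∀ x ∈ Ioc α β, ∫ t in (0:ℝ)..F x, 2 * (|t| + γ) = (min (v x) γ') ^ 2 - γ ^ 2 := by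
    intro x hx
    have : ∫ t in (0:ℝ)..F x, 2 * (|t| + γ) = ∫ t in (0:ℝ)..F x, (2 * t + 2 * γ) := by
      apply intervalIntegral.integral_congr
      intro t ht
      rw [uIcc_of_le (hFnn x hx)] at ht
      simp only [abs_of_nonneg ht.1]; ring
    have e1 : ∫ t in (0:ℝ)..F x, 2 * t = F x ^ 2 := by
      rw [intervalIntegral.integral_const_mul, integral_id]; ring
    rw [this, intervalIntegral.integral_add
      (Continuous.intervalIntegrable (by fun_prop) _ _)
      (Continuous.intervalIntegrable (by fun_prop) _ _), e1, intervalIntegral.integral_const,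
      smul_eq_mul]
    simp only [hF]
    ring
  have hL : ∫⁻ x in Ioc α β, ENNReal.ofReal (∫ t in (0:ℝ)..F x, 2 * (|t| + γ)) ∂μ =
      ∫⁻ x in Ioc α β, ENNReal.ofReal ((min (v x) γ') ^ 2 - γ ^ 2) ∂μ :=
    setLIntegral_congr_fun measurableSet_Ioc (fun x hx => by simp only [hk x hx])
  have hnn : ∀ x ∈ Ioc α β, 0 ≤ (min (v x) γ') ^ 2 - γ ^ 2 := by
    intro x hx
    have := le_min (hvγ x hx) hγγ
    nlinarith
  have hIntg : IntegrableOn (fun x => (min (v x) γ') ^ 2 - γ ^ 2) (Ioc α β) μ := by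
    have : IsFiniteMeasure (μ.restrict (Ioc α β)) := ⟨by simpa using hfin.lt_top⟩
    refine Integrable.of_bound (C := γ' ^ 2) (Continuous.aestronglyMeasurable (by fun_prop)) ?_
    filter_upwards [ae_restrict_mem measurableSet_Ioc] with x hx
    rw [Real.norm_of_nonneg (hnn x hx)]
    have h1 := le_min (hvγ x hx) hγγ
    have h2 := min_le_right (v x) γ'
    nlinarith
  have hR : ENNReal.ofReal (∫ x in Ioc α β, ((min (v x) γ') ^ 2 - γ ^ 2) ∂μ) =
      ∫⁻ x in Ioc α β, ENNReal.ofReal ((min (v x) γ') ^ 2 - γ ^ 2) ∂μ :=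
    ofReal_integral_eq_lintegral_ofReal hIntg
      (by filter_upwards [ae_restrict_mem measurableSet_Ioc] with x hx using hnn x hx)
  have hRnn : 0 ≤ ∫ x in Ioc α β, ((min (v x) γ') ^ 2 - γ ^ 2) ∂μ :=
    setIntegral_nonneg measurableSet_Ioc hnn
  have hcont : ContinuousOn (fun t => 2 * tan (((β - α) - (r1 + r2) * t) / 2) * (2 * (t + γ)))
      (Icc 0 (γ' - γ)) := by
    have : ContinuousOn (fun t => tan (((β - α) - (r1 + r2) * t) / 2)) (Icc 0 (γ' - γ)) := by
      apply ContinuousOn.comp (t := {x | cos x ≠ 0}) continuousOn_tan (by fun_prop)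
      intro t ht
      obtain ⟨h1, h2⟩ := hpos t ht
      exact (cos_pos_of_mem_Ioo ⟨by linarith [pi_pos], h2⟩).ne'
    fun_prop
  rw [← ENNReal.ofReal_le_ofReal_iff hRnn, hR, ← hL, hlc,
    intervalIntegral.integral_of_le h0, ofReal_integral_eq_lintegral_ofReal]
  · refine le_trans ?_ (lintegral_mono_set (s := Ioc 0 (γ' - γ)) (fun t ht => ht.1))
    apply setLIntegral_mono' measurableSet_Ioc
    intro t ht
    have h1 : r1 * t ≤ r1 * (γ' - γ) := by gcongr; exact ht.2
    have h2 : r2 * t ≤ r2 * (γ' - γ) := by gcongr; exact ht.2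
    have h3 := mul_pos hr1 ht.1
    have h4 := mul_pos hr2 ht.1
    have htan : 0 ≤ tan (((β - α) - (r1 + r2) * t) / 2) := by
      obtain ⟨h1, h2⟩ := hpos t ⟨ht.1.le, ht.2⟩
      exact tan_nonneg_of_nonneg_of_le_pi_div_two h1 h2.le
    rw [ENNReal.ofReal_mul (by positivity), abs_of_pos ht.1]
    gcongr
    rw [Measure.restrict_apply (measurableSet_le measurable_const hFc.measurable)]
    have := hμ (α + r1 * t) (β - r2 * t) (by linarith) (by linarith) (by linarith)
    have e : (β - r2 * t) - (α + r1 * t) = (β - α) - (r1 + r2) * t := by ring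
    rw [e] at this
    refine this.trans (measure_mono ?_)
    intro x hx
    refine ⟨?_, by linarith [hx.1], by linarith [hx.2]⟩
    have : γ + t ≤ v x := by
      rcases le_total x (α + r1 * (γ' - γ)) with h | h
      · rw [hvl x ⟨by linarith [hx.1], h⟩]
        have : t ≤ (x - α) / r1 := by rw [le_div_iff₀ hr1]; linarith [hx.1]
        linarith
      rcases le_total x (β - r2 * (γ' - γ)) with h' | h'
      · linarith [hvm x ⟨h, h'⟩, ht.2]
      · rw [hvr x ⟨h', by linarith [hx.2]⟩]
        have : t ≤ (β - x) / r2 := by rw [le_div_iff₀ hr2]; linarith [hx.2]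
        linarith
    have h6 := le_min this (show γ + t ≤ γ' by linarith [ht.2])
    show t ≤ min (v x) γ' - γ
    linarith
  · exact (hcont.integrableOn_Icc).mono_set Ioc_subset_Icc_self
  · filter_upwards [ae_restrict_mem measurableSet_Ioc] with t ht
    have htan : 0 ≤ tan (((β - α) - (r1 + r2) * t) / 2) := by
      obtain ⟨h1, h2⟩ := hpos t ⟨ht.1.le, ht.2⟩
      exact tan_nonneg_of_nonneg_of_le_pi_div_two h1 h2.le
    have := ht.1.le
    show 0 ≤ 2 * tan (((β - α) - (r1 + r2) * t) / 2) * (2 * (t + γ))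
    positivity
set_option maxHeartbeats 1000000 in
/-- The trapezoid step. -/
lemma aux_trap (μ : Measure ℝ) {v : ℝ → ℝ} (hv : Continuous v) {α α' β' β γ γ' E1 E2 : ℝ}
    (hγ : 0 ≤ γ) (hγγ : γ ≤ γ') (h1 : α ≤ α') (h2 : α' ≤ β') (h3 : β' ≤ β)
    (hl : β - α < π)
    (hμ : ∀ x y, α ≤ x → x ≤ y → y ≤ β → ENNReal.ofReal (2 * tan ((y - x) / 2)) ≤ μ (Ioc x y))
    (hfin : μ (Ioc α β) ≠ ∞)
    (hvl : ∃ A B, (∀ x ∈ Icc α α', v x = A * x + B) ∧ E1 = A ^ 2 * (α' - α))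
    (hvr : ∃ A B, (∀ x ∈ Icc β' β, v x = A * x + B) ∧ E2 = A ^ 2 * (β - β'))
    (ha : v α = γ) (ha' : v α' = γ') (hb : v β = γ) (hb' : v β' = γ')
    (hvm : ∀ x ∈ Icc α' β', γ' ≤ v x) {E : ℝ}
    (hE : -8 * tan ((β' - α') / 2) * γ' ^ 2 ≤
      E - 4 * (∫ x in α'..β', v x ^ 2) + 2 * ∫ x in Ioc α' β', (v x ^ 2 - γ' ^ 2) ∂μ) :
    -8 * tan ((β - α) / 2) * γ ^ 2 ≤
      (E1 + E + E2) - 4 * (∫ x in α..β, v x ^ 2) + 2 * ∫ x in Ioc α β, (v x ^ 2 - γ ^ 2) ∂μ := by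
  obtain ⟨A1, B1, hv1, rfl⟩ := hvl
  obtain ⟨A2, B2, hv2, rfl⟩ := hvr
  have ea : A1 * α + B1 = γ := by rw [← hv1 α ⟨le_rfl, h1⟩, ha]
  have ea' : A1 * α' + B1 = γ' := by rw [← hv1 α' ⟨h1, le_rfl⟩, ha']
  have eb : A2 * β + B2 = γ := by rw [← hv2 β ⟨h3, le_rfl⟩, hb]
  have eb' : A2 * β' + B2 = γ' := by rw [← hv2 β' ⟨le_rfl, h3⟩, hb']
  have hii : ∀ p q : ℝ, IntervalIntegrable (fun x => v x ^ 2) volume p q :=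
    fun p q => Continuous.intervalIntegrable (by fun_prop) _ _
  have hsplit : ∫ x in α..β, v x ^ 2 =
      (∫ x in α..α', v x ^ 2) + (∫ x in α'..β', v x ^ 2) + ∫ x in β'..β, v x ^ 2 := by
    rw [intervalIntegral.integral_add_adjacent_intervals (hii _ _) (hii _ _),
      intervalIntegral.integral_add_adjacent_intervals (hii _ _) (hii _ _)]
  have hq : ∀ A B p q : ℝ, p ≤ q → (∀ x ∈ Icc p q, v x = A * x + B) →
      ∫ x in p..q, v x ^ 2 = (q - p) * ((A * p + B) ^ 2 + (A * p + B) * (A * q + B)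
        + (A * q + B) ^ 2) / 3 := by
    intro A B p q hpq hpl
    have : ∫ x in p..q, v x ^ 2 = ∫ x in p..q, (A ^ 2 * x ^ 2 + (2 * A * B) * x + B ^ 2) := by
      apply intervalIntegral.integral_congr
      intro x hx
      rw [uIcc_of_le hpq] at hx
      simp only [hpl x hx]; ring
    rw [this, intervalIntegral.integral_add
      (Continuous.intervalIntegrable (by fun_prop) _ _)
      (Continuous.intervalIntegrable (by fun_prop) _ _), intervalIntegral.integral_add
      (Continuous.intervalIntegrable (by fun_prop) _ _)
      (Continuous.intervalIntegrable (by fun_prop) _ _), intervalIntegral.integral_const,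
      intervalIntegral.integral_const_mul, intervalIntegral.integral_const_mul, integral_pow,
      integral_id, smul_eq_mul]
    push_cast
    ring
  have hs1 := hq A1 B1 α α' h1 hv1
  have hs2 := hq A2 B2 β' β h3 hv2
  rw [ea, ea'] at hs1
  rw [eb, eb'] at hs2
  have hfm : ∀ s ⊆ Ioc α β, μ s ≠ ∞ := fun s hs => ((measure_mono hs).trans_lt hfin.lt_top).ne
  have hIntg : ∀ g : ℝ → ℝ, Continuous g → ∀ s ⊆ Ioc α β, IntegrableOn g s μ := by
    intro g hg s hs
    apply IntegrableOn.mono_set _ hs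
    have : IsFiniteMeasure (μ.restrict (Ioc α β)) := ⟨by simpa using hfin.lt_top⟩
    obtain ⟨C, hC⟩ := isCompact_Icc.exists_bound_of_continuousOn (s := Icc α β) hg.continuousOn
    refine Integrable.of_bound (C := C) (Continuous.aestronglyMeasurable hg) ?_
    filter_upwards [ae_restrict_mem measurableSet_Ioc] with x hx
    exact hC x ⟨hx.1.le, hx.2⟩
  have hsub : Ioc α' β' ⊆ Ioc α β := Ioc_subset_Ioc h1 h3
  rcases hγγ.eq_or_lt with heq | hlt
  · -- flat case
    subst heq
    have hA1 : A1 ^ 2 * (α' - α) = 0 := by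
      have : A1 * (α' - α) = 0 := by linarith
      rw [pow_two, mul_assoc, this, mul_zero]
    have hA2 : A2 ^ 2 * (β - β') = 0 := by
      have : A2 * (β - β') = 0 := by linarith
      rw [pow_two, mul_assoc, this, mul_zero]
    have hmono : ∫ x in Ioc α' β', (v x ^ 2 - γ ^ 2) ∂μ ≤ ∫ x in Ioc α β, (v x ^ 2 - γ ^ 2) ∂μ := by
      apply setIntegral_mono_set (hIntg _ (by fun_prop) _ le_rfl) _ (ae_of_all _ hsub)
      filter_upwards [ae_restrict_mem measurableSet_Ioc] with x hx
      show 0 ≤ v x ^ 2 - γ ^ 2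
      have hx' : γ ≤ v x := by
        rcases le_total x α' with h | h
        · rw [hv1 x ⟨hx.1.le, h⟩]
          have h5 : A1 * (α' - α) = 0 := by linarith
          rcases mul_eq_zero.1 h5 with h6 | h6
          · rw [h6] at ea ⊢; linarith
          · have : x = α := by linarith [hx.1]
            rw [this]; linarith
        rcases le_total x β' with h' | h'
        · exact hvm x ⟨h, h'⟩
        · rw [hv2 x ⟨h', hx.2⟩]
          have h5 : A2 * (β - β') = 0 := by linarith
          rcases mul_eq_zero.1 h5 with h6 | h6
          · rw [h6] at eb ⊢; linarith
          · have : x = β := by linarith [hx.2]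
            rw [this]; linarith
      exact sub_nonneg.2 (pow_le_pow_left₀ hγ hx' 2)
    have t1 : (β - α) / 2 - (β' - α') / 2 ≤ tan ((β - α) / 2) - tan ((β' - α') / 2) := by
      have h7 : 0 ≤ (β - α) / 2 - (β' - α') / 2 := by linarith
      have h8 := aux_tan_add h7 (show 0 ≤ (β' - α') / 2 by linarith) (by linarith)
      have h9 := le_tan h7 (by linarith)
      rw [sub_add_cancel] at h8
      linarith
    rw [hsplit, hs1, hs2, hA1, hA2]
    nlinarith [mul_le_mul_of_nonneg_right t1 (sq_nonneg γ)]
  · -- genuine case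
    have hα : α < α' := by
      rcases h1.eq_or_lt with h | h
      · rw [← h] at ea'; linarith
      · exact h
    have hβ : β' < β := by
      rcases h3.eq_or_lt with h | h
      · rw [h] at eb'; linarith
      · exact h
    have hh : 0 < γ' - γ := by linarith
    set r1 := (α' - α) / (γ' - γ) with hr1
    set r2 := (β - β') / (γ' - γ) with hr2
    have hr1p : 0 < r1 := div_pos (by linarith) hh
    have hr2p : 0 < r2 := div_pos (by linarith) hh
    have m1 : r1 * (γ' - γ) = α' - α := by rw [hr1]; field_simp
    have m2 : r2 * (γ' - γ) = β - β' := by rw [hr2]; field_simp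
    have hA1 : A1 = 1 / r1 := by
      rw [eq_div_iff hr1p.ne']
      apply mul_right_cancel₀ hh.ne'
      rw [mul_assoc, m1]; linarith
    have hA2 : A2 = -(1 / r2) := by
      rw [eq_comm, neg_eq_iff_eq_neg, div_eq_iff hr2p.ne']
      apply mul_right_cancel₀ hh.ne'
      rw [mul_assoc, m2]; linarith
    have k1 : α + r1 * (γ' - γ) = α' := by linarith
    have k2 : β - r2 * (γ' - γ) = β' := by linarith
    have hlay := aux_layer μ hv (α := α) (β := β) hγ hγγ hr1p hr2p (by rw [k1, k2]; exact h2) hl hμ hfin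
      (by
        rw [k1]; intro x hx; rw [hv1 x hx]
        have : B1 = γ - A1 * α := by linarith
        rw [this, hA1]; ring)
      (by
        rw [k2]; intro x hx; rw [hv2 x hx]
        have : B2 = γ - A2 * β := by linarith
        rw [this, hA2]; ring)
      (by rw [k1, k2]; exact hvm)
    have hcal := aux_calc (γ := γ) (γ' := γ') (r := r1 + r2) (l := β - α) (by positivity) hγ hγγ hl
      (by rw [add_mul, m1, m2]; linarith)
    have em : (β - α) - (r1 + r2) * (γ' - γ) = β' - α' := by rw [add_mul, m1, m2]; ring
    rw [em] at hcal
    have e4 : (∫ t in (0:ℝ)..(γ' - γ), 4 * (tan (((β - α) - (r1 + r2) * t) / 2) * (2 * (t + γ)))) =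
       2 * ∫ t in (0:ℝ)..(γ' - γ), 2 * tan (((β - α) - (r1 + r2) * t) / 2) * (2 * (t + γ)) := by
      rw [← intervalIntegral.integral_const_mul]; congr 1; ext t; ring
    have hdec : (∫ x in Ioc α β, ((min (v x) γ') ^ 2 - γ ^ 2) ∂μ)
        + (∫ x in Ioc α' β', (v x ^ 2 - γ' ^ 2) ∂μ) ≤ ∫ x in Ioc α β, (v x ^ 2 - γ ^ 2) ∂μ := by
      have e5 : ∫ x in Ioc α β, (v x ^ 2 - γ ^ 2) ∂μ =
          (∫ x in Ioc α β, ((min (v x) γ') ^ 2 - γ ^ 2) ∂μ)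
          + ∫ x in Ioc α β, (v x ^ 2 - (min (v x) γ') ^ 2) ∂μ := by
        rw [← integral_add (hIntg _ (by fun_prop) _ le_rfl) (hIntg _ (by fun_prop) _ le_rfl)]
        congr 1; ext x; ring
      have e6 : ∫ x in Ioc α' β', (v x ^ 2 - γ' ^ 2) ∂μ =
          ∫ x in Ioc α' β', (v x ^ 2 - (min (v x) γ') ^ 2) ∂μ := by
        apply setIntegral_congr_fun measurableSet_Ioc
        intro x hx
        simp only [min_eq_right (hvm x ⟨hx.1.le, hx.2⟩)]
      rw [e5, e6]
      refine add_le_add le_rfl ?_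
      apply setIntegral_mono_set (hIntg _ (by fun_prop) _ le_rfl) _ (ae_of_all _ hsub)
      filter_upwards [ae_restrict_mem measurableSet_Ioc] with x hx
      show 0 ≤ v x ^ 2 - (min (v x) γ') ^ 2
      have hx' : 0 ≤ v x := by
        rcases le_total x α' with h | h
        · have : A1 * α ≤ A1 * x := by
            have : 0 < A1 := by rw [hA1]; positivity
            gcongr; exact hx.1.le
          rw [hv1 x ⟨hx.1.le, h⟩]; linarith
        rcases le_total x β' with h' | h'
        · linarith [hvm x ⟨h, h'⟩]
        · have : (-A2) * x ≤ (-A2) * β := by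
            have : 0 < -A2 := by rw [hA2, neg_neg]; positivity
            gcongr; exact hx.2
          rw [hv2 x ⟨h', hx.2⟩]; linarith
      have h8 := min_le_left (v x) γ'
      have h9 : 0 ≤ min (v x) γ' := le_min hx' (by linarith)
      exact sub_nonneg.2 (pow_le_pow_left₀ h9 h8 2)
    have hgrad : 4 * (γ' - γ) / (r1 + r2) ≤ A1 ^ 2 * (α' - α) + A2 ^ 2 * (β - β') := by
      rw [hA1, hA2, ← m1, ← m2]
      have : (1 / r1) ^ 2 * (r1 * (γ' - γ)) + (-(1 / r2)) ^ 2 * (r2 * (γ' - γ)) - 4 * (γ' - γ) / (r1 + r2)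
        = (γ' - γ) * (r1 - r2) ^ 2 / (r1 * r2 * (r1 + r2)) := by field_simp; ring
      have h9 : 0 ≤ (γ' - γ) * (r1 - r2) ^ 2 / (r1 * r2 * (r1 + r2)) := by positivity
      linarith
    have e7 : 4 * (r1 + r2) * γ' ^ 3 / 3 - 4 * (r1 + r2) * γ ^ 3 / 3
        = 4 * ((α' - α) + (β - β')) * (γ ^ 2 + γ * γ' + γ' ^ 2) / 3 := by
      rw [← m1, ← m2]; ring
    have e8 : 4 * γ' / (r1 + r2) - 4 * γ / (r1 + r2) = 4 * (γ' - γ) / (r1 + r2) := by ring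
    rw [hsplit, hs1, hs2]
    rw [e4] at hcal
    linarith


/-- The tree lemma: induction on the number of interior nodes. -/
lemma aux_tree (μ : Measure ℝ) {v H : ℝ → ℝ} (hv : Continuous v) (N : Finset ℝ) {α0 β0 : ℝ}
    (hl : β0 - α0 < π)
    (hμ : ∀ x y, α0 ≤ x → x ≤ y → y ≤ β0 → ENNReal.ofReal (2 * tan ((y - x) / 2)) ≤ μ (Ioc x y))
    (hfin : μ (Ioc α0 β0) ≠ ∞)
    (hpl : ∀ p q, α0 ≤ p → p ≤ q → q ≤ β0 → (∀ n ∈ N, n ∉ Ioo p q) →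
      ∃ A B, (∀ x ∈ Icc p q, v x = A * x + B) ∧ H q - H p = A ^ 2 * (q - p)) :
    ∀ n : ℕ, ∀ α β γ : ℝ, (N.filter (fun x => x ∈ Ioo α β)).card ≤ n → α0 ≤ α → α ≤ β → β ≤ β0 →
      0 ≤ γ → v α = γ → v β = γ → (∀ x ∈ Icc α β, γ ≤ v x) →
      -8 * tan ((β - α) / 2) * γ ^ 2 ≤
        (H β - H α) - 4 * (∫ x in α..β, v x ^ 2) + 2 * ∫ x in Ioc α β, (v x ^ 2 - γ ^ 2) ∂μ := by
  intro n
  induction n with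
  | zero =>
    intro α β γ hc h1 h2 h3 hγ ha hb hge
    have hno : ∀ n ∈ N, n ∉ Ioo α β := by
      intro n hn hn'
      have : n ∈ N.filter (fun x => x ∈ Ioo α β) := Finset.mem_filter.2 ⟨hn, hn'⟩
      rw [Nat.le_zero, Finset.card_eq_zero] at hc
      rw [hc] at this; simp at this
    obtain ⟨A, B, hAB, hH⟩ := hpl α β h1 h2 h3 hno
    have e1 : A * α + B = γ := by rw [← hAB α ⟨le_rfl, h2⟩, ha]
    have e2 : A * β + B = γ := by rw [← hAB β ⟨h2, le_rfl⟩, hb]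
    have hA : A * (β - α) = 0 := by linarith
    have hcst : ∀ x ∈ Icc α β, v x = γ := by
      intro x hx
      rw [hAB x hx]
      rcases mul_eq_zero.1 hA with h | h
      · rw [h] at e1 ⊢; linarith
      · have : x = α := by linarith [hx.1, hx.2]
        rw [this, e1]
    have i1 : ∫ x in α..β, v x ^ 2 = (β - α) * γ ^ 2 := by
      rw [intervalIntegral.integral_congr (g := fun _ => γ ^ 2)]
      · simp
      · intro x hx
        rw [uIcc_of_le h2] at hx
        simp only [hcst x hx]
    have i2 : ∫ x in Ioc α β, (v x ^ 2 - γ ^ 2) ∂μ = 0 := by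
      apply setIntegral_eq_zero_of_forall_eq_zero
      intro x hx
      rw [hcst x ⟨hx.1.le, hx.2⟩]; ring
    have hH0 : H β - H α = 0 := by rw [hH, pow_two, mul_assoc, hA, mul_zero]
    have ht := le_tan (show 0 ≤ (β - α) / 2 by linarith) (by linarith)
    rw [hH0, i1, i2]
    nlinarith [mul_le_mul_of_nonneg_right ht (sq_nonneg γ)]
  | succ n ih =>
    intro α β γ hc h1 h2 h3 hγ ha hb hge
    by_cases hne : (N.filter (fun x => x ∈ Ioo α β)).Nonempty
    swap
    · apply ih α β γ _ h1 h2 h3 hγ ha hb hge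
      rw [Finset.not_nonempty_iff_eq_empty.1 hne]; simp
    set F := N.filter (fun x => x ∈ Ioo α β) with hF
    set p := F.min' hne
    set q := F.max' hne
    have hpF : p ∈ F := F.min'_mem hne
    have hqF : q ∈ F := F.max'_mem hne
    have hp : p ∈ Ioo α β := (Finset.mem_filter.1 hpF).2
    have hq : q ∈ Ioo α β := (Finset.mem_filter.1 hqF).2
    have hpq : p ≤ q := F.min'_le q hqF
    obtain ⟨c, hcm, hcmin⟩ := isCompact_Icc.exists_isMinOn (nonempty_Icc.2 hpq) hv.continuousOn
    have hcm' : ∀ x ∈ Icc p q, v c ≤ v x := fun x hx => hcmin hx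
    have hγγ : γ ≤ v c := hge c ⟨hp.1.le.trans hcm.1, hcm.2.trans hq.2.le⟩
    obtain ⟨A1, B1, hv1, hH1⟩ := hpl α p h1 hp.1.le (hp.2.le.trans h3) (by
      intro x hx hx'
      have : x ∈ F := Finset.mem_filter.2 ⟨hx, hx'.1, hx'.2.trans hp.2⟩
      exact absurd (F.min'_le x this) (not_le.2 hx'.2))
    obtain ⟨A2, B2, hv2, hH2⟩ := hpl q β (h1.trans hq.1.le) hq.2.le h3 (by
      intro x hx hx'
      have : x ∈ F := Finset.mem_filter.2 ⟨hx, hq.1.trans hx'.1, hx'.2⟩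
      exact absurd (F.le_max' x this) (not_le.2 hx'.1))
    obtain ⟨α', hα', vα'⟩ := intermediate_value_Icc hp.1.le hv.continuousOn
      (show v c ∈ Icc (v α) (v p) from ⟨by rw [ha]; exact hγγ, hcm' p ⟨le_rfl, hpq⟩⟩)
    obtain ⟨β', hβ', vβ'⟩ := intermediate_value_Icc' hq.2.le hv.continuousOn
      (show v c ∈ Icc (v β) (v q) from ⟨by rw [hb]; exact hγγ, hcm' q ⟨hpq, le_rfl⟩⟩)
    have e1 : A1 * α + B1 = γ := by rw [← hv1 α ⟨le_rfl, hp.1.le⟩, ha]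
    have e1' : A1 * α' + B1 = v c := by rw [← hv1 α' hα', vα']
    have e2 : A2 * β + B2 = γ := by rw [← hv2 β ⟨hq.2.le, le_rfl⟩, hb]
    have e2' : A2 * β' + B2 = v c := by rw [← hv2 β' hβ', vβ']
    have f1 : A1 * p + B1 = v p := by rw [← hv1 p ⟨hp.1.le, le_rfl⟩]
    have f2 : A2 * q + B2 = v q := by rw [← hv2 q ⟨le_rfl, hq.2.le⟩]
    have g1 := hcm' p ⟨le_rfl, hpq⟩
    have g2 := hcm' q ⟨hpq, le_rfl⟩
    have hA1 : 0 ≤ A1 := by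
      by_contra hneg
      have : A1 * (p - α) < 0 := mul_neg_of_neg_of_pos (not_le.1 hneg) (by linarith [hp.1])
      linarith
    have hA2 : A2 ≤ 0 := by
      by_contra hneg
      have : 0 < A2 * (β - q) := mul_pos (not_le.1 hneg) (by linarith [hq.2])
      linarith
    have hmid : ∀ x ∈ Icc α' β', v c ≤ v x := by
      intro x hx
      rcases le_total x p with h | h
      · rw [hv1 x ⟨hα'.1.trans hx.1, h⟩]
        nlinarith [hx.1]
      rcases le_total x q with h' | h'
      · exact hcm' x ⟨h, h'⟩
      · rw [hv2 x ⟨h', hx.2.trans hβ'.2⟩]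
        nlinarith [hx.2]
    have hαc : α' ≤ c := hα'.2.trans hcm.1
    have hcβ : c ≤ β' := hcm.2.trans hβ'.1
    have hc1 : (N.filter (fun x => x ∈ Ioo α' c)).card ≤ n := by
      have : N.filter (fun x => x ∈ Ioo α' c) ⊂ F := by
        rw [Finset.ssubset_iff_of_subset]
        · refine ⟨q, hqF, ?_⟩
          intro hqq
          have := (Finset.mem_filter.1 hqq).2.2
          exact absurd hcm.2 (not_le.2 this)
        · intro x hx
          rw [Finset.mem_filter] at hx
          exact Finset.mem_filter.2 ⟨hx.1, hα'.1.trans_lt hx.2.1, hx.2.2.trans (hcm.2.trans_lt hq.2)⟩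
      have := Finset.card_lt_card this
      omega
    have hc2 : (N.filter (fun x => x ∈ Ioo c β')).card ≤ n := by
      have : N.filter (fun x => x ∈ Ioo c β') ⊂ F := by
        rw [Finset.ssubset_iff_of_subset]
        · refine ⟨p, hpF, ?_⟩
          intro hqq
          have := (Finset.mem_filter.1 hqq).2.1
          exact absurd hcm.1 (not_le.2 this)
        · intro x hx
          rw [Finset.mem_filter] at hx
          exact Finset.mem_filter.2 ⟨hx.1, (hp.1.trans_le hcm.1).trans hx.2.1, hx.2.2.trans_le hβ'.2⟩
      have := Finset.card_lt_card this
      omega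
    have hγ' : 0 ≤ v c := hγ.trans hγγ
    have r1 := ih α' c (v c) hc1 (h1.trans hα'.1) hαc (hcβ.trans (hβ'.2.trans h3)) hγ' vα' rfl
      (fun x hx => hmid x ⟨hx.1, hx.2.trans hcβ⟩)
    have r2 := ih c β' (v c) hc2 (h1.trans (hα'.1.trans hαc)) hcβ (hβ'.2.trans h3) hγ' rfl vβ'
      (fun x hx => hmid x ⟨hαc.trans hx.1, hx.2⟩)
    have hii : ∀ p q : ℝ, IntervalIntegrable (fun x => v x ^ 2) volume p q :=
      fun p q => Continuous.intervalIntegrable (by fun_prop) _ _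
    have s1 := intervalIntegral.integral_add_adjacent_intervals (hii α' c) (hii c β')
    have hIntg : ∀ s ⊆ Ioc α0 β0, IntegrableOn (fun x => v x ^ 2 - (v c) ^ 2) s μ := by
      intro s hs
      apply IntegrableOn.mono_set _ hs
      have : IsFiniteMeasure (μ.restrict (Ioc α0 β0)) := ⟨by simpa using hfin.lt_top⟩
      obtain ⟨C, hC⟩ := isCompact_Icc.exists_bound_of_continuousOn (s := Icc α0 β0)
        (f := fun x => v x ^ 2 - (v c) ^ 2) (by fun_prop)
      refine Integrable.of_bound (C := C) (Continuous.aestronglyMeasurable (by fun_prop)) ?_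
      filter_upwards [ae_restrict_mem measurableSet_Ioc] with x hx
      exact hC x ⟨hx.1.le, hx.2⟩
    have s2 : ∫ x in Ioc α' β', (v x ^ 2 - (v c) ^ 2) ∂μ =
        (∫ x in Ioc α' c, (v x ^ 2 - (v c) ^ 2) ∂μ) + ∫ x in Ioc c β', (v x ^ 2 - (v c) ^ 2) ∂μ := by
      rw [← Ioc_union_Ioc_eq_Ioc hαc hcβ, setIntegral_union (Ioc_disjoint_Ioc_of_le le_rfl)
        measurableSet_Ioc (hIntg _ (Ioc_subset_Ioc (h1.trans hα'.1) (hcβ.trans (hβ'.2.trans h3))))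
        (hIntg _ (Ioc_subset_Ioc (h1.trans (hα'.1.trans hαc)) (hβ'.2.trans h3)))]
    have ht := aux_tan_add (show 0 ≤ (c - α') / 2 by linarith) (show 0 ≤ (β' - c) / 2 by linarith)
      (by linarith [hα'.1, hβ'.2])
    have et : (c - α') / 2 + (β' - c) / 2 = (β' - α') / 2 := by ring
    rw [et] at ht
    have hmain : -8 * tan ((β' - α') / 2) * (v c) ^ 2 ≤
      (H β' - H α') - 4 * (∫ x in α'..β', v x ^ 2) + 2 * ∫ x in Ioc α' β', (v x ^ 2 - (v c) ^ 2) ∂μ := by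
      rw [← s1, s2]
      have := mul_le_mul_of_nonneg_right ht (sq_nonneg (v c))
      linarith
    obtain ⟨A3, B3, hv3, hH3⟩ := hpl α α' h1 hα'.1 (hα'.2.trans (hp.2.le.trans h3)) (by
      intro x hx hx'
      have : x ∈ F := Finset.mem_filter.2 ⟨hx, hx'.1, hx'.2.trans_le (hα'.2.trans hp.2.le)⟩
      exact absurd (F.min'_le x this) (not_le.2 (hx'.2.trans_le hα'.2)))
    obtain ⟨A4, B4, hv4, hH4⟩ := hpl β' β (h1.trans (hq.1.le.trans hβ'.1)) hβ'.2 h3 (by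
      intro x hx hx'
      have : x ∈ F := Finset.mem_filter.2 ⟨hx, (hq.1.le.trans hβ'.1).trans_lt hx'.1, hx'.2⟩
      exact absurd (F.le_max' x this) (not_le.2 (hβ'.1.trans_lt hx'.1)))
    have hfin' : μ (Ioc α β) ≠ ∞ := ((measure_mono (Ioc_subset_Ioc h1 h3)).trans_lt hfin.lt_top).ne
    have := aux_trap μ hv hγ hγγ hα'.1 (hαc.trans hcβ) hβ'.2 (by linarith)
      (fun x y hx hxy hy => hμ x y (h1.trans hx) hxy (hy.trans h3)) hfin'
      ⟨A3, B3, hv3, hH3⟩ ⟨A4, B4, hv4, hH4⟩ ha vα' hb vβ' hmid hmain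
    have e9 : H α' - H α + (H β' - H α') + (H β - H β') = H β - H α := by ring
    rwa [e9] at this


lemma aux_cs {u : ℝ → ℝ} (hu : ContDiff ℝ 1 u) {p q : ℝ} (hpq : p < q) :
    (u q - u p) ^ 2 / (q - p) ≤ ∫ x in p..q, (deriv u x) ^ 2 := by
  have hcd : Continuous (deriv u) := hu.continuous_deriv le_rfl
  have hd : Differentiable ℝ u := hu.differentiable one_ne_zero
  have h0 : ∫ x in p..q, deriv u x = u q - u p :=
    intervalIntegral.integral_deriv_eq_sub (fun x _ => hd x) (hcd.intervalIntegrable _ _)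
  set c := (u q - u p) / (q - p) with hc
  have hqp : 0 < q - p := by linarith
  have h1 : 0 ≤ ∫ x in p..q, (deriv u x - c) ^ 2 :=
    intervalIntegral.integral_nonneg hpq.le (fun x _ => sq_nonneg _)
  have h2 : ∫ x in p..q, (deriv u x - c) ^ 2 =
      (∫ x in p..q, (deriv u x) ^ 2) - 2 * c * (u q - u p) + c ^ 2 * (q - p) := by
    have : ∫ x in p..q, (deriv u x - c) ^ 2 =
        ∫ x in p..q, ((deriv u x) ^ 2 - 2 * c * deriv u x + c ^ 2) := by
      congr 1; ext x; ring
    rw [this, intervalIntegral.integral_add (Continuous.intervalIntegrable (by fun_prop) _ _)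
      (Continuous.intervalIntegrable (by fun_prop) _ _),
      intervalIntegral.integral_sub (Continuous.intervalIntegrable (by fun_prop) _ _)
      (Continuous.intervalIntegrable (by fun_prop) _ _), intervalIntegral.integral_const_mul, h0,
      intervalIntegral.integral_const, smul_eq_mul]
    ring
  have h3 : c * (q - p) = u q - u p := by rw [hc]; field_simp
  have h4 : (u q - u p) ^ 2 / (q - p) = c * (u q - u p) := by rw [hc]; ring
  have h5 : c ^ 2 * (q - p) = c * (u q - u p) := by rw [pow_two, mul_assoc, h3]
  rw [h4]
  linarith

lemma aux_interp {u : ℝ → ℝ} (hu : ContDiff ℝ 1 u) {L : ℝ} (hL : 0 ≤ L)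
    (hLip : ∀ x y, |u x - u y| ≤ L * |x - y|) {α β ε : ℝ} (hαβ : α < β) (hε : 0 < ε) :
    ∃ (v H : ℝ → ℝ) (N : Finset ℝ), Continuous v ∧
      (∀ p q, α ≤ p → p ≤ q → q ≤ β → (∀ n ∈ N, n ∉ Ioo p q) →
        ∃ A B, (∀ x ∈ Icc p q, v x = A * x + B) ∧ H q - H p = A ^ 2 * (q - p)) ∧
      v α = max (|u α| - ε) 0 ∧ v β = max (|u β| - ε) 0 ∧
      (∀ x ∈ Icc α β, 0 ≤ v x ∧ v x ≤ |u x| ∧ |u x| - 2 * ε ≤ v x) ∧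
      H β - H α ≤ ∫ x in α..β, (deriv u x) ^ 2 := by
  set z : ℝ → ℝ := fun y => max (|u y| - ε) 0 with hz
  have hzz : ∀ x y, |z x - z y| ≤ |u x - u y| := by
    intro x y
    refine (abs_max_sub_max_le_abs _ _ _).trans ?_
    rw [show |u x| - ε - (|u y| - ε) = |u x| - |u y| by ring]
    exact abs_abs_sub_abs_le _ _
  obtain ⟨n, hn⟩ := exists_nat_gt (max 1 (L * (β - α) / ε))
  have hn1 : (1:ℝ) < n := (le_max_left _ _).trans_lt hn
  have hn0 : (0:ℝ) < n := by linarith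
  set δ := (β - α) / n with hδ
  have hδ0 : 0 < δ := div_pos (by linarith) hn0
  have hnδ : n * δ = β - α := by rw [hδ]; field_simp
  have hLδ : L * δ ≤ ε := by
    have h1 : L * (β - α) / ε < n := (le_max_right _ _).trans_lt hn
    rw [div_lt_iff₀ hε] at h1
    rw [hδ, ← mul_div_assoc, div_le_iff₀ hn0]; linarith
  set X : ℤ → ℝ := fun k => α + k * δ with hX
  set mm : ℤ → ℝ := fun j => (z (X j) - z (X (j - 1))) / δ with hmm
  set w : ℝ → ℝ := fun x => mm ⌈(x - α) / δ⌉ with hw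
  have hXs : ∀ j, X j - X (j - 1) = δ := by intro j; simp only [hX]; push_cast; ring
  have hmb : ∀ j, |mm j| ≤ L := by
    intro j
    rw [hmm]; simp only
    rw [abs_div, abs_of_pos hδ0, div_le_iff₀ hδ0]
    refine (hzz _ _).trans ((hLip _ _).trans ?_)
    rw [hXs, abs_of_pos hδ0]
  have hwm : Measurable w :=
    (measurable_of_countable mm).comp (Int.measurable_ceil.comp (by fun_prop))
  have hwi : ∀ p q, IntervalIntegrable w volume p q := by
    intro p q
    rw [intervalIntegrable_iff]
    exact IntegrableOn.of_bound (by simp) hwm.aestronglyMeasurable L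
      (ae_of_all _ fun x => hmb _)
  have hwi2 : ∀ p q, IntervalIntegrable (fun x => w x ^ 2) volume p q := by
    intro p q
    rw [intervalIntegrable_iff]
    refine IntegrableOn.of_bound (by simp) (hwm.pow_const 2).aestronglyMeasurable (L ^ 2)
      (ae_of_all _ fun x => ?_)
    rw [norm_pow]
    exact pow_le_pow_left₀ (norm_nonneg _) (hmb _) 2
  set v : ℝ → ℝ := fun x => z α + ∫ t in α..x, w t with hv
  set H : ℝ → ℝ := fun x => ∫ t in α..x, w t ^ 2 with hH
  have hwc : ∀ j : ℤ, ∀ x ∈ Ioc (X (j - 1)) (X j), w x = mm j := by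
    intro j x hx
    rw [hw]; simp only
    congr 1
    rw [Int.ceil_eq_iff]
    simp only [hX] at hx
    push_cast at hx
    constructor
    · rw [lt_div_iff₀ hδ0]; linarith [hx.1]
    · rw [div_le_iff₀ hδ0]; linarith [hx.2]
  have hcell : ∀ j : ℤ, ∀ p q, X (j - 1) ≤ p → p ≤ q → q ≤ X j →
      v q - v p = mm j * (q - p) ∧ H q - H p = mm j ^ 2 * (q - p) := by
    intro j p q h1 h2 h3
    constructor
    · have : v q - v p = ∫ t in p..q, w t := by
        simp only [hv]
        rw [← intervalIntegral.integral_add_adjacent_intervals (hwi α p) (hwi p q)]; ring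
      rw [this, intervalIntegral.integral_of_le h2, setIntegral_congr_fun (g := fun _ => mm j)
        measurableSet_Ioc (fun x hx => hwc j x ⟨h1.trans_lt hx.1, hx.2.trans h3⟩)]
      rw [← intervalIntegral.integral_of_le h2, intervalIntegral.integral_const, smul_eq_mul, mul_comm]
    · have : H q - H p = ∫ t in p..q, w t ^ 2 := by
        simp only [hH]
        rw [← intervalIntegral.integral_add_adjacent_intervals (hwi2 α p) (hwi2 p q)]; ring
      rw [this, intervalIntegral.integral_of_le h2, setIntegral_congr_fun (g := fun _ => mm j ^ 2)
        measurableSet_Ioc (fun x hx => by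
          simp only [hwc j x ⟨h1.trans_lt hx.1, hx.2.trans h3⟩])]
      rw [← intervalIntegral.integral_of_le h2, intervalIntegral.integral_const, smul_eq_mul, mul_comm]
  have hX0 : X 0 = α := by simp [hX]
  have hXn : X n = β := by simp only [hX]; push_cast; rw [hnδ]; ring
  have hind : ∀ k : ℕ, v (X k) = z (X k) ∧ H (X k) - H α ≤ ∫ x in α..X k, (deriv u x) ^ 2 := by
    intro k
    induction k with
    | zero => simp [hX0, hv]
    | succ k ih =>
      have hk : X ((k:ℤ) + 1 - 1) = X k := by congr 1; ring
      have hs := hXs ((k:ℤ) + 1)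
      obtain ⟨c1, c2⟩ := hcell (k + 1) (X k) (X (k + 1)) hk.le (by rw [hk] at hs; linarith) le_rfl
      have em : mm (k + 1) = (z (X (k + 1)) - z (X k)) / δ := by simp only [hmm]; rw [hk]
      rw [hk] at hs
      push_cast
      rw [hs, em] at c1 c2
      constructor
      · have : (z (X (↑k + 1)) - z (X ↑k)) / δ * δ = z (X (↑k + 1)) - z (X ↑k) := by field_simp
        linarith [ih.1]
      · have hcd : Continuous (deriv u) := hu.continuous_deriv le_rfl
        rw [← intervalIntegral.integral_add_adjacent_intervals (b := X k)
          (Continuous.intervalIntegrable (by fun_prop) _ _)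
          (Continuous.intervalIntegrable (by fun_prop) _ _)]
        have hcs := aux_cs hu (show X k < X (k + 1) by linarith)
        rw [hs] at hcs
        have : ((z (X (↑k + 1)) - z (X ↑k)) / δ) ^ 2 * δ = (z (X (↑k + 1)) - z (X ↑k)) ^ 2 / δ := by
          field_simp
        rw [this] at c2
        have h5 : (z (X (↑k + 1)) - z (X ↑k)) ^ 2 / δ ≤ (u (X (↑k + 1)) - u (X ↑k)) ^ 2 / δ := by
          apply div_le_div_of_nonneg_right _ hδ0.le
          exact sq_le_sq.2 (hzz _ _)
        linarith [ih.2]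
  refine ⟨v, H, (Finset.range (n + 1)).image (fun k : ℕ => X k), ?_, ?_, ?_, ?_, ?_, ?_⟩
  · exact continuous_const.add (intervalIntegral.continuous_primitive hwi α)
  · intro p q h1 h2 h3 hno
    rcases h2.eq_or_lt with rfl | hlt
    · refine ⟨0, v p, ?_, by simp⟩
      intro x hx
      rw [le_antisymm hx.2 hx.1]; ring
    set k := ⌊(p - α) / δ⌋ with hk
    have hk0 : 0 ≤ k := Int.floor_nonneg.2 (div_nonneg (by linarith) hδ0.le)
    have hk1 : X k ≤ p := by
      have := Int.floor_le ((p - α) / δ)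
      rw [le_div_iff₀ hδ0] at this
      simp only [hX]; linarith
    have hk2 : p < X (k + 1) := by
      have := Int.lt_floor_add_one ((p - α) / δ)
      rw [div_lt_iff₀ hδ0] at this
      simp only [hX]; push_cast; linarith
    have hkn : k < n := by
      have : (k:ℝ) * δ < n * δ := by rw [hnδ]; simp only [hX] at hk1; linarith
      have := lt_of_mul_lt_mul_right this hδ0.le
      exact_mod_cast this
    have hq : q ≤ X (k + 1) := by
      by_contra hcon
      apply hno (X (k + 1)) _ ⟨hk2, not_le.1 hcon⟩
      rw [Finset.mem_image]
      refine ⟨(k + 1).toNat, ?_, ?_⟩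
      · rw [Finset.mem_range]; omega
      · rw [Int.toNat_of_nonneg (by omega)]
    have hkk : X (k + 1 - 1) = X k := by congr 1; ring
    refine ⟨mm (k + 1), v p - mm (k + 1) * p, ?_, ?_⟩
    · intro x hx
      have := (hcell (k + 1) p x (hkk.le.trans hk1) hx.1 (hx.2.trans hq)).1
      linarith
    · exact (hcell (k + 1) p q (hkk.le.trans hk1) h2 hq).2
  · simp [hv, hz]
  · have := (hind n).1
    push_cast at this
    rwa [hXn] at this
  · intro x hx
    have hj : ∃ k : ℕ, X k ≤ x ∧ x ≤ X (k + 1) := by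
      set k := ⌊(x - α) / δ⌋ with hk
      have hk0 : 0 ≤ k := Int.floor_nonneg.2 (div_nonneg (by linarith [hx.1]) hδ0.le)
      refine ⟨k.toNat, ?_, ?_⟩
      · rw [Int.toNat_of_nonneg hk0]
        have := Int.floor_le ((x - α) / δ)
        rw [le_div_iff₀ hδ0] at this
        simp only [hX]; linarith
      · rw [Int.toNat_of_nonneg hk0]
        have := Int.lt_floor_add_one ((x - α) / δ)
        rw [div_lt_iff₀ hδ0] at this
        simp only [hX]; push_cast; linarith
    obtain ⟨k, hk1, hk2⟩ := hj
    have hk : X ((k:ℤ) + 1 - 1) = X k := by congr 1; ring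
    have hs := hXs ((k:ℤ) + 1)
    rw [hk] at hs
    have c1 := (hcell (k + 1) (X k) x hk.le hk1 hk2).1
    have c2 := (hcell (k + 1) x (X (k + 1)) (hk.le.trans hk1) hk2 le_rfl).1
    have v1 := (hind k).1
    have v2 := (hind (k + 1)).1
    push_cast at v2
    have hclose : ∀ y, |x - y| ≤ δ → 0 ≤ z y ∧ z y ≤ |u x| ∧ |u x| - 2 * ε ≤ z y := by
      intro y hy
      have h1 : |u x - u y| ≤ ε := (hLip x y).trans ((mul_le_mul_of_nonneg_left hy hL).trans hLδ)
      have h2 := (abs_le.1 ((abs_abs_sub_abs_le (u x) (u y)).trans h1))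
      refine ⟨le_max_right _ _, max_le (by linarith [h2.1]) (abs_nonneg _), ?_⟩
      exact le_trans (by linarith [h2.2]) (le_max_left _ _)
    have b1 := hclose (X k) (by rw [abs_le]; constructor <;> linarith)
    have b2 := hclose (X (k + 1)) (by rw [abs_le]; constructor <;> linarith)
    rw [v1] at c1
    rw [v2] at c2
    have hconv : ∀ C, C ≤ z (X k) → C ≤ z (X (k + 1)) → C ≤ v x := by
      intro C hC1 hC2
      rcases le_total 0 (mm (k + 1)) with h | h
      · have := mul_nonneg h (sub_nonneg.2 hk1); linarith
      · have := mul_nonpos_of_nonpos_of_nonneg h (sub_nonneg.2 hk2); linarith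
    have hconv' : ∀ C, z (X k) ≤ C → z (X (k + 1)) ≤ C → v x ≤ C := by
      intro C hC1 hC2
      rcases le_total 0 (mm (k + 1)) with h | h
      · have := mul_nonneg h (sub_nonneg.2 hk2); linarith
      · have := mul_nonpos_of_nonpos_of_nonneg h (sub_nonneg.2 hk1); linarith
    exact ⟨hconv _ b1.1 b2.1, hconv' _ b1.2.1 b2.2.1, hconv _ b1.2.2 b2.2.2⟩
  · have := (hind n).2
    push_cast at this
    rwa [hXn] at this


lemma aux_A1 (μ : Measure ℝ) {u : ℝ → ℝ} (hu : ContDiff ℝ 1 u) {L : ℝ} (hL : 0 ≤ L)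
    (hLip : ∀ x y, |u x - u y| ≤ L * |x - y|) {α β ε : ℝ} (hαβ : α < β) (hε : 0 < ε)
    (hl : β - α < π)
    (hμ : ∀ x y, α ≤ x → x ≤ y → y ≤ β → ENNReal.ofReal (2 * tan ((y - x) / 2)) ≤ μ (Ioc x y))
    (hfin : μ (Ioc α β) ≠ ∞) (ha : |u α| ≤ ε) (hb : |u β| ≤ ε) :
    4 * (∫ x in α..β, (max (|u x| - 2 * ε) 0) ^ 2) ≤
      (∫ x in α..β, (deriv u x) ^ 2) + 2 * ∫ x in Ioc α β, (u x ^ 2) ∂μ := by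
  obtain ⟨v, H, N, hv, hpl, va, vb, hvb, hH⟩ := aux_interp hu hL hLip hαβ hε
  rw [max_eq_right (by linarith)] at va vb
  have key := aux_tree μ hv N hl hμ hfin hpl _ α β 0 le_rfl le_rfl hαβ.le le_rfl le_rfl va vb
    (fun x hx => (hvb x hx).1)
  have huc : Continuous u := hu.continuous
  have hIntg : ∀ g : ℝ → ℝ, Continuous g → IntegrableOn g (Ioc α β) μ := by
    intro g hg
    have : IsFiniteMeasure (μ.restrict (Ioc α β)) := ⟨by simpa using hfin.lt_top⟩
    obtain ⟨C, hC⟩ := isCompact_Icc.exists_bound_of_continuousOn (s := Icc α β) hg.continuousOn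
    refine Integrable.of_bound (C := C) (Continuous.aestronglyMeasurable hg) ?_
    filter_upwards [ae_restrict_mem measurableSet_Ioc] with x hx
    exact hC x ⟨hx.1.le, hx.2⟩
  have h1 : ∫ x in Ioc α β, (v x ^ 2 - 0 ^ 2) ∂μ ≤ ∫ x in Ioc α β, (u x ^ 2) ∂μ := by
    apply setIntegral_mono_on (hIntg _ (by fun_prop)) (hIntg _ (by fun_prop)) measurableSet_Ioc
    intro x hx
    have := hvb x ⟨hx.1.le, hx.2⟩
    have h2 := pow_le_pow_left₀ this.1 this.2.1 2
    rw [sq_abs] at h2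
    linarith
  have h2 : ∫ x in α..β, (max (|u x| - 2 * ε) 0) ^ 2 ≤ ∫ x in α..β, v x ^ 2 := by
    apply intervalIntegral.integral_mono_on hαβ.le (Continuous.intervalIntegrable (by fun_prop) _ _)
      (Continuous.intervalIntegrable (by fun_prop) _ _)
    intro x hx
    have := hvb x hx
    exact pow_le_pow_left₀ (le_max_right _ _) (max_le this.2.2 this.1) 2
  have e0 : -8 * tan ((β - α) / 2) * 0 ^ 2 = 0 := by ring
  rw [e0] at key
  linarith

lemma aux_int_nonpos {g : ℝ → ℝ} {a b : ℝ} (hab : a ≤ b) (h : ∀ x ∈ Icc a b, g x ≤ 0) :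
    ∫ x in a..b, g x ≤ 0 := by
  have := intervalIntegral.integral_nonneg (f := fun x => -g x) (μ := volume) hab
    (fun x hx => by linarith [h x hx])
  rw [intervalIntegral.integral_neg] at this
  linarith

lemma aux_lint {g : ℝ → ℝ} (hg : Continuous g) (h0 : ∀ x, 0 ≤ g x) {a b : ℝ} (hab : a ≤ b) :
    ∫⁻ x in Ioo a b, ENNReal.ofReal (g x) = ENNReal.ofReal (∫ x in a..b, g x) := by
  rw [intervalIntegral.integral_of_le hab, integral_Ioc_eq_integral_Ioo,
    ofReal_integral_eq_lintegral_ofReal]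
  · exact (hg.integrableOn_Icc (a := a) (b := b)).mono_set Ioo_subset_Icc_self
  · exact ae_of_all _ h0

lemma aux_lip {u : ℝ → ℝ} (hu : ContDiff ℝ 1 u) {e1 e2 : ℝ} (h0 : ∀ x ∉ Ioo e1 e2, u x = 0) :
    ∃ L : ℝ, 0 ≤ L ∧ ∀ x y, |u x - u y| ≤ L * |x - y| := by
  have hc : HasCompactSupport u := by
    apply HasCompactSupport.intro (isCompact_Icc (a := e1) (b := e2))
    intro x hx
    exact h0 x (fun h => hx ⟨h.1.le, h.2.le⟩)
  obtain ⟨C, hC⟩ := ContDiff.lipschitzWith_of_hasCompactSupport hc hu one_ne_zero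
  refine ⟨C, C.2, fun x y => ?_⟩
  have := hC.dist_le_mul x y
  rwa [Real.dist_eq, Real.dist_eq] at this

lemma aux_A (μ : Measure ℝ) {u : ℝ → ℝ} (hu : ContDiff ℝ 1 u) {e1 e2 : ℝ} (he : e1 < e2)
    (hl : e2 - e1 ≤ π) (h0 : ∀ x ∉ Ioo e1 e2, u x = 0)
    (hμ : ∀ x y, e1 < x → x ≤ y → y < e2 → ENNReal.ofReal (2 * tan ((y - x) / 2)) ≤ μ (Ioc x y))
    (hfin : ∀ x y, e1 < x → x ≤ y → y < e2 → μ (Ioc x y) ≠ ∞) :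
    4 * (∫⁻ x in Ioo e1 e2, ENNReal.ofReal (u x ^ 2)) ≤
      (∫⁻ x in Ioo e1 e2, ENNReal.ofReal ((deriv u x) ^ 2)) +
       2 * ∫⁻ x in Ioo e1 e2, ENNReal.ofReal (u x ^ 2) ∂μ := by
  set T := (∫⁻ x in Ioo e1 e2, ENNReal.ofReal ((deriv u x) ^ 2)) +
       2 * ∫⁻ x in Ioo e1 e2, ENNReal.ofReal (u x ^ 2) ∂μ with hT
  by_cases hTt : T = ∞
  · rw [hTt]; exact le_top
  obtain ⟨L, hL, hLip⟩ := aux_lip hu h0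
  have huc : Continuous u := hu.continuous
  have hcd : Continuous (deriv u) := hu.continuous_deriv le_rfl
  rw [aux_lint (by fun_prop) (fun x => sq_nonneg _) he.le]
  rw [show (4:ℝ≥0∞) = ENNReal.ofReal 4 by norm_num, ← ENNReal.ofReal_mul (by norm_num)]
  rw [ENNReal.ofReal_le_iff_le_toReal hTt]
  set I1 := ∫ x in e1..e2, |u x| with hI1
  have hI1n : 0 ≤ I1 := intervalIntegral.integral_nonneg he.le (fun x _ => abs_nonneg _)
  apply le_of_forall_pos_le_add
  intro ε' hε'
  set ε := ε' / (16 * I1 + 1) with hεd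
  have hε : 0 < ε := by positivity
  have hεI : 16 * ε * I1 ≤ ε' := by
    have : ε * (16 * I1 + 1) = ε' := by rw [hεd]; field_simp
    nlinarith
  set η := min (ε / (L + 1)) ((e2 - e1) / 4) with hη
  have hη0 : 0 < η := lt_min (by positivity) (by linarith)
  have hη1 : L * η ≤ ε := by
    have : η ≤ ε / (L + 1) := min_le_left _ _
    rw [le_div_iff₀ (by positivity)] at this
    nlinarith
  have hη2 : η ≤ (e2 - e1) / 4 := min_le_right _ _
  set α := e1 + η with hα
  set β := e2 - η with hβ
  have hu1 : ∀ x ∈ Icc e1 α, |u x| ≤ ε := by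
    intro x hx
    have h := hLip x e1
    rw [h0 e1 (by simp), sub_zero, abs_of_nonneg (show 0 ≤ x - e1 by linarith [hx.1])] at h
    exact h.trans ((mul_le_mul_of_nonneg_left (by linarith [hx.2]) hL).trans hη1)
  have hu2 : ∀ x ∈ Icc β e2, |u x| ≤ ε := by
    intro x hx
    have h := hLip x e2
    rw [h0 e2 (by simp), sub_zero, abs_sub_comm,
      abs_of_nonneg (show 0 ≤ e2 - x by linarith [hx.2])] at h
    exact h.trans ((mul_le_mul_of_nonneg_left (by linarith [hx.1]) hL).trans hη1)
  have hαβ : α < β := by linarith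
  have key := aux_A1 μ hu hL hLip (α := α) (β := β) hαβ hε (by linarith)
    (fun x y h1 h2 h3 => hμ x y (by linarith) h2 (by linarith))
    (hfin α β (by linarith) hαβ.le (by linarith)) (hu1 α ⟨by linarith, le_rfl⟩)
    (hu2 β ⟨le_rfl, by linarith⟩)
  have hsub : Ioc α β ⊆ Ioo e1 e2 := fun x hx => ⟨by linarith [hx.1], by linarith [hx.2]⟩
  have hRT : (∫ x in α..β, (deriv u x) ^ 2) + 2 * ∫ x in Ioc α β, (u x ^ 2) ∂μ ≤ T.toReal := by
    have p1 : 0 ≤ ∫ x in α..β, (deriv u x) ^ 2 :=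
      intervalIntegral.integral_nonneg hαβ.le (fun x _ => sq_nonneg _)
    have p2 : 0 ≤ ∫ x in Ioc α β, (u x ^ 2) ∂μ := integral_nonneg (fun x => sq_nonneg _)
    rw [← ENNReal.ofReal_le_iff_le_toReal hTt, ENNReal.ofReal_add p1 (by positivity),
      ENNReal.ofReal_mul (by norm_num), hT, ← aux_lint (by fun_prop) (fun x => sq_nonneg _) hαβ.le]
    have p3 : ENNReal.ofReal (∫ x in Ioc α β, (u x ^ 2) ∂μ) ≤
        ∫⁻ x in Ioc α β, ENNReal.ofReal (u x ^ 2) ∂μ := by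
      by_cases hi : IntegrableOn (fun x => u x ^ 2) (Ioc α β) μ
      · rw [ofReal_integral_eq_lintegral_ofReal hi (ae_of_all _ fun x => sq_nonneg _)]
      · rw [integral_undef hi]; simp
    refine add_le_add (lintegral_mono_set (Ioo_subset_Ioc_self.trans hsub)) ?_
    rw [show ENNReal.ofReal 2 = 2 by norm_num]
    exact mul_le_mul_right (p3.trans (lintegral_mono_set hsub)) _
  have hii : ∀ p q : ℝ, IntervalIntegrable (fun x => u x ^ 2 - 4 * ε * |u x|) volume p q :=
    fun p q => Continuous.intervalIntegrable (by fun_prop) _ _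
  have hneg : ∀ x, |u x| ≤ ε → u x ^ 2 - 4 * ε * |u x| ≤ 0 := by
    intro x hx
    rw [← sq_abs]; nlinarith [abs_nonneg (u x)]
  have i1 : ∫ x in e1..α, (u x ^ 2 - 4 * ε * |u x|) ≤ 0 :=
    aux_int_nonpos (by linarith) (fun x hx => hneg x (hu1 x hx))
  have i2 : ∫ x in β..e2, (u x ^ 2 - 4 * ε * |u x|) ≤ 0 :=
    aux_int_nonpos (by linarith) (fun x hx => hneg x (hu2 x hx))
  have i3 : ∫ x in α..β, (u x ^ 2 - 4 * ε * |u x|) ≤ ∫ x in α..β, (max (|u x| - 2 * ε) 0) ^ 2 := by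
    apply intervalIntegral.integral_mono_on hαβ.le (hii _ _)
      (Continuous.intervalIntegrable (by fun_prop) _ _)
    intro x hx
    rw [← sq_abs (u x)]
    rcases le_total (|u x| - 2 * ε) 0 with h | h
    · rw [max_eq_right h]; nlinarith [abs_nonneg (u x)]
    · rw [max_eq_left h]; nlinarith [abs_nonneg (u x)]
  have i4 : (∫ x in e1..e2, (u x ^ 2 - 4 * ε * |u x|)) = (∫ x in e1..e2, u x ^ 2) - 4 * ε * I1 := by
    rw [intervalIntegral.integral_sub (Continuous.intervalIntegrable (by fun_prop) _ _)
      (Continuous.intervalIntegrable (by fun_prop) _ _), intervalIntegral.integral_const_mul]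
  have i5 : (∫ x in e1..e2, (u x ^ 2 - 4 * ε * |u x|)) =
      (∫ x in e1..α, (u x ^ 2 - 4 * ε * |u x|)) + (∫ x in α..β, (u x ^ 2 - 4 * ε * |u x|))
      + ∫ x in β..e2, (u x ^ 2 - 4 * ε * |u x|) := by
    rw [intervalIntegral.integral_add_adjacent_intervals (hii _ _) (hii _ _),
      intervalIntegral.integral_add_adjacent_intervals (hii _ _) (hii _ _)]
  linarith


lemma aux_ric {u w w' : ℝ → ℝ} (hu : ContDiff ℝ 1 u) {p q B : ℝ} (hpq : p ≤ q)
    (hw : ∀ x ∈ Icc p q, HasDerivAt w (w' x) x) (hB : ∀ x ∈ Icc p q, w' x + w x ^ 2 ≤ B) :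
    w q * u q ^ 2 - w p * u p ^ 2 ≤ (∫ x in p..q, (deriv u x) ^ 2) + B * ∫ x in p..q, u x ^ 2 := by
  have huc : Continuous u := hu.continuous
  have hcd : Continuous (deriv u) := hu.continuous_deriv le_rfl
  have hd : Differentiable ℝ u := hu.differentiable one_ne_zero
  have hF : ∀ x ∈ Icc p q, HasDerivAt (fun x => w x * u x ^ 2)
      (w' x * u x ^ 2 + w x * (2 * u x * deriv u x)) x := by
    intro x hx
    have h1 := (hw x hx).mul ((hd x).hasDerivAt.pow 2)
    refine h1.congr_deriv ?_
    simp
  have := intervalIntegral.sub_le_integral_of_hasDeriv_right_of_le (a := p) (b := q) hpq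
    (g := fun x => w x * u x ^ 2) (g' := fun x => w' x * u x ^ 2 + w x * (2 * u x * deriv u x))
    (φ := fun x => (deriv u x) ^ 2 + B * u x ^ 2)
    (fun x hx => (hF x hx).continuousAt.continuousWithinAt)
    (fun x hx => (hF x ⟨hx.1.le, hx.2.le⟩).hasDerivWithinAt)
    (Continuous.integrableOn_Icc (by fun_prop))
    (fun x hx => by
      have h1 := mul_le_mul_of_nonneg_right (hB x ⟨hx.1.le, hx.2.le⟩) (sq_nonneg (u x))
      nlinarith [sq_nonneg (deriv u x - w x * u x)])
  rwa [intervalIntegral.integral_add (Continuous.intervalIntegrable (by fun_prop) _ _)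
      (Continuous.intervalIntegrable (by fun_prop) _ _), intervalIntegral.integral_const_mul] at this

lemma aux_B : ∃ A : ℝ, 1 ≤ A ∧ ∀ u : ℝ → ℝ, ContDiff ℝ 1 u → (∀ x ∉ Ioo (-(π / 2)) (π / 2), u x = 0) →
    4 * (∫ x in (-(π / 2))..(π / 2), u x ^ 2) ≤
      (∫ x in (-(π / 2))..(π / 2), (deriv u x) ^ 2) + A * ∫ x in (-(π / 16))..(π / 16), u x ^ 2 := by
  set W := 2 * tan (7 * π / 16) with hW
  have hpi := pi_pos
  have hW0 : 0 ≤ W := by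
    have := le_tan (x := 7 * π / 16) (by positivity) (by linarith)
    rw [hW]; linarith
  set k := W / (π / 16) with hk
  have hk0 : 0 ≤ k := by positivity
  have hkW : k * (π / 16) = W := by rw [hk]; field_simp
  refine ⟨k + W ^ 2 + 4, by nlinarith, ?_⟩
  intro u hu h0
  have huc : Continuous u := hu.continuous
  have hcd : Continuous (deriv u) := hu.continuous_deriv le_rfl
  have htd : ∀ c x, -(π / 2) < 2 * (x - c) → 2 * (x - c) < π / 2 →
      HasDerivAt (fun x => -2 * tan (2 * (x - c))) (-4 * (1 + tan (2 * (x - c)) ^ 2)) x := by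
    intro c x h1 h2
    have hc : 0 < cos (2 * (x - c)) := cos_pos_of_mem_Ioo ⟨h1, h2⟩
    have h3 : HasDerivAt (fun x : ℝ => 2 * (x - c)) 2 x := by
      have := ((hasDerivAt_id x).sub_const c).const_mul 2
      simpa using this
    have h4 := ((hasDerivAt_tan hc.ne').comp x h3).const_mul (-2)
    refine h4.congr_deriv ?_
    rw [← inv_one_add_tan_sq hc.ne']
    field_simp
    ring
  have r1 := aux_ric (w := fun x => -2 * tan (2 * (x - 9 * π / 32)))
    (w' := fun x => -4 * (1 + tan (2 * (x - 9 * π / 32)) ^ 2)) (B := -4) hu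
    (p := π / 16) (q := π / 2) (by linarith)
    (fun x hx => htd _ x (by linarith [hx.1]) (by linarith [hx.2])) (fun x hx => by nlinarith)
  have r2 := aux_ric (w := fun x => -2 * tan (2 * (x - (-(9 * π / 32)))))
    (w' := fun x => -4 * (1 + tan (2 * (x - (-(9 * π / 32)))) ^ 2)) (B := -4) hu
    (p := -(π / 2)) (q := -(π / 16)) (by linarith)
    (fun x hx => htd _ x (by linarith [hx.1]) (by linarith [hx.2])) (fun x hx => by nlinarith)
  have r3 := aux_ric (w := fun x => k * x) (w' := fun x => k) (B := k + W ^ 2) hu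
    (p := -(π / 16)) (q := π / 16) (by linarith)
    (fun x hx => by simpa using (hasDerivAt_id x).const_mul k) (fun x hx => by
      have h1 : |k * x| ≤ |W| := by
        rw [← hkW, abs_mul, abs_mul]
        refine mul_le_mul_of_nonneg_left ?_ (abs_nonneg _)
        rw [abs_of_pos (show 0 < π / 16 by positivity)]
        exact abs_le.2 hx
      have := sq_le_sq.2 h1
      linarith)
  have e1 : -2 * tan (2 * (π / 16 - 9 * π / 32)) = W := by
    rw [show 2 * (π / 16 - 9 * π / 32) = -(7 * π / 16) by ring, tan_neg, hW]; ring
  have e2 : -2 * tan (2 * (-(π / 16) - (-(9 * π / 32)))) = -W := by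
    rw [show 2 * (-(π / 16) - (-(9 * π / 32))) = 7 * π / 16 by ring, hW]; ring
  rw [e1, h0 (π / 2) (by simp)] at r1
  rw [e2, h0 (-(π / 2)) (by simp)] at r2
  rw [mul_neg, hkW] at r3
  have s : ∀ g : ℝ → ℝ, Continuous g → ∫ x in (-(π / 2))..(π / 2), g x =
      (∫ x in (-(π / 2))..(-(π / 16)), g x) + (∫ x in (-(π / 16))..(π / 16), g x)
      + ∫ x in (π / 16)..(π / 2), g x := by
    intro g hg
    have hii : ∀ p q : ℝ, IntervalIntegrable g volume p q := fun p q => hg.intervalIntegrable _ _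
    rw [intervalIntegral.integral_add_adjacent_intervals (hii _ _) (hii _ _),
      intervalIntegral.integral_add_adjacent_intervals (hii _ _) (hii _ _)]
  rw [s (fun x => u x ^ 2) (by fun_prop), s (fun x => deriv u x ^ 2) (by fun_prop)]
  nlinarith


lemma aux_cmp (μ1 μ2 : Measure ℝ) {e1 e2 : ℝ} (D : Set ℝ)
    (hD : ∀ x y, e1 ≤ x → x < y → y ≤ e2 → ∃ z ∈ D, x < z ∧ z < y)
    (h : ∀ x ∈ D, ∀ y ∈ D, e1 < x → x < y → y < e2 → μ1 (Ioc x y) ≤ μ2 (Ioc x y))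
    (hfin : ∀ x y, e1 < x → x < y → y < e2 → μ2 (Ioc x y) ≠ ∞) :
    ∀ S, MeasurableSet S → S ⊆ Ioo e1 e2 → μ1 S ≤ μ2 S := by
  have hIcc : ∀ x y, e1 < x → x ≤ y → y < e2 → μ1 (Icc x y) ≤ μ2 (Icc x y) := by
    intro x y h1 h2 h3
    obtain ⟨a0, -, ha0, ha0'⟩ := hD e1 x le_rfl h1 (h2.trans h3.le)
    obtain ⟨b0, -, hb0, hb0'⟩ := hD y e2 (h1.le.trans h2) h3 le_rfl
    have hf : IsFiniteMeasure (μ2.restrict (Ioc a0 b0)) :=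
      ⟨by simpa using (hfin a0 b0 ha0 (by linarith) hb0').lt_top⟩
    apply ENNReal.le_of_forall_pos_le_add
    intro ε hε _
    obtain ⟨U, hU, hUo, hUm⟩ := exists_isOpen_le_add (Icc x y) (μ2.restrict (Ioc a0 b0))
      (ENNReal.coe_pos.2 hε).ne'
    obtain ⟨a1, ha1, ha1'⟩ := exists_Ioc_subset_of_mem_nhds (hUo.mem_nhds (hU ⟨le_rfl, h2⟩)) ⟨a0, ha0'⟩
    obtain ⟨b1, hb1, hb1'⟩ := exists_Ico_subset_of_mem_nhds (hUo.mem_nhds (hU ⟨h2, le_rfl⟩)) ⟨b0, hb0⟩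
    obtain ⟨a, haD, ha, ha'⟩ := hD (max a0 a1) x (ha0.le.trans (le_max_left _ _)) (max_lt ha0' ha1)
      (by linarith)
    obtain ⟨b, hbD, hb, hb'⟩ := hD y (min b0 b1) (by linarith) (lt_min hb0 hb1)
      ((min_le_left _ _).trans hb0'.le)
    have ha2 := max_lt_iff.1 ha
    have hb2 := lt_min_iff.1 hb'
    have hsU : Ioc a b ⊆ U := by
      intro t ht
      rcases le_total t x with h | h
      · exact ha1' ⟨ha2.2.trans ht.1, h⟩
      rcases le_total t y with h' | h'
      · exact hU ⟨h, h'⟩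
      · exact hb1' ⟨h', ht.2.trans_lt hb2.2⟩
    calc μ1 (Icc x y) ≤ μ1 (Ioc a b) := measure_mono fun t ht => ⟨ha'.trans_le ht.1, ht.2.trans hb.le⟩
      _ ≤ μ2 (Ioc a b) := h a haD b hbD (ha0.trans ha2.1) (by linarith) (hb2.1.trans hb0')
      _ = μ2.restrict (Ioc a0 b0) (Ioc a b) := by
          rw [Measure.restrict_apply measurableSet_Ioc, inter_eq_left.2 (Ioc_subset_Ioc ha2.1.le hb2.1.le)]
      _ ≤ μ2.restrict (Ioc a0 b0) U := measure_mono hsU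
      _ ≤ μ2.restrict (Ioc a0 b0) (Icc x y) + ε := hUm
      _ ≤ μ2 (Icc x y) + ε := by gcongr; exact Measure.restrict_le_self
  intro S hS hSe
  have hloc : ∀ a b, e1 < a → b < e2 → μ1 (S ∩ Ioo a b) ≤ μ2 (S ∩ Ioo a b) := by
    intro a b ha hb
    rcases le_or_gt b a with hba | hab
    · rw [Ioo_eq_empty (not_lt.2 hba)]; simp
    have hf2 : IsFiniteMeasure (μ2.restrict (Ioo a b)) :=
      ⟨by simpa using (measure_mono Ioo_subset_Ioc_self).trans_lt (hfin a b ha hab hb).lt_top⟩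
    have hf1 : IsFiniteMeasure (μ1.restrict (Ioo a b)) := by
      constructor
      obtain ⟨a0, -, ha0, ha0'⟩ := hD e1 a le_rfl ha (by linarith)
      obtain ⟨b0, -, hb0, hb0'⟩ := hD b e2 (by linarith) hb le_rfl
      have : Ioo a b ⊆ Icc a b := Ioo_subset_Icc_self
      rw [Measure.restrict_apply_univ]
      refine (measure_mono this).trans_lt ((hIcc a b ha hab.le hb).trans_lt ?_)
      refine (measure_mono (show Icc a b ⊆ Ioc a0 b from fun t ht => ⟨ha0'.trans_le ht.1, ht.2⟩)).trans_lt ?_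
      exact (hfin a0 b ha0 (by linarith) hb).lt_top
    have := VitaliFamily.measure_le_of_frequently_le (Besicovitch.vitaliFamily (μ1.restrict (Ioo a b)))
      (ρ := μ1.restrict (Ioo a b)) (μ2.restrict (Ioo a b)) Measure.AbsolutelyContinuous.rfl
      (S ∩ Ioo a b) (by
        intro x hx
        apply (Besicovitch.tendsto_filterAt _ x).frequently
        apply Eventually.frequently
        have : Ioo 0 (min (x - a) (b - x)) ∈ nhdsWithin (0:ℝ) (Ioi 0) :=
          Ioo_mem_nhdsGT (lt_min (by linarith [hx.2.1]) (by linarith [hx.2.2]))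
        filter_upwards [this] with r hr
        have hr2 := lt_min_iff.1 hr.2
        have hs : Icc (x - r) (x + r) ⊆ Ioo a b :=
          fun t ht => ⟨by linarith [ht.1], by linarith [ht.2]⟩
        rw [Real.closedBall_eq_Icc, Measure.restrict_apply measurableSet_Icc,
          Measure.restrict_apply measurableSet_Icc,
          inter_eq_left.2 hs]
        exact hIcc _ _ (by linarith) (by linarith [hr.1]) (by linarith))
    rwa [Measure.restrict_apply (hS.inter measurableSet_Ioo),
      Measure.restrict_apply (hS.inter measurableSet_Ioo), inter_assoc, inter_self] at this
  have hmono : Monotone fun n : ℕ => S ∩ Ioo (e1 + 1 / ((n:ℝ) + 1)) (e2 - 1 / ((n:ℝ) + 1)) := by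
    intro i j hij
    have := one_div_le_one_div_of_le (show (0:ℝ) < (i:ℝ) + 1 by positivity)
      (show (i:ℝ) + 1 ≤ (j:ℝ) + 1 by simpa using hij)
    exact inter_subset_inter_right _ (Ioo_subset_Ioo (by linarith) (by linarith))
  have hU : S = ⋃ n : ℕ, S ∩ Ioo (e1 + 1 / ((n:ℝ) + 1)) (e2 - 1 / ((n:ℝ) + 1)) := by
    apply Subset.antisymm
    · intro x hx
      have hx' := hSe hx
      obtain ⟨n, hn⟩ := exists_nat_one_div_lt
        (show 0 < min (x - e1) (e2 - x) from lt_min (by linarith [hx'.1]) (by linarith [hx'.2]))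
      have := lt_min_iff.1 hn
      exact mem_iUnion.2 ⟨n, hx, by linarith, by linarith⟩
    · exact iUnion_subset fun n => inter_subset_left
  rw [hU, hmono.measure_iUnion]
  refine iSup_le fun n => ?_
  have hn : (0:ℝ) < 1 / ((n:ℝ) + 1) := by positivity
  exact (hloc _ _ (by linarith) (by linarith)).trans (measure_mono (subset_iUnion
    (fun n : ℕ => S ∩ Ioo (e1 + 1 / ((n:ℝ) + 1)) (e2 - 1 / ((n:ℝ) + 1))) n))


lemma aux_logc {h : ℝ → ℝ} {I : Set ℝ} {m : ℕ} (hm : 0 < m) (hpos : ∀ x ∈ I, 0 < h x)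
    (hc : ConcaveOn ℝ I (fun x => h x ^ ((1 : ℝ) / m))) :
    ConcaveOn ℝ I (fun y => Real.log (h y)) := by
  have hm' : (0:ℝ) < m := by exact_mod_cast hm
  have e : ∀ x ∈ I, Real.log (h x) = m * Real.log (h x ^ ((1 : ℝ) / m)) := by
    intro x hx
    rw [Real.log_rpow (hpos x hx)]; field_simp
  refine ⟨hc.1, ?_⟩
  intro x hx y hy a b ha hb hab
  have hxy := hc.1 hx hy ha hb hab
  have hk := hc.2 hx hy ha hb hab
  simp only [smul_eq_mul] at *
  rw [e x hx, e y hy, e _ hxy]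
  have p1 : 0 < h x ^ ((1 : ℝ) / m) := Real.rpow_pos_of_pos (hpos x hx) _
  have p2 : 0 < h y ^ ((1 : ℝ) / m) := Real.rpow_pos_of_pos (hpos y hy) _
  have hl := strictConcaveOn_log_Ioi.concaveOn.2 (show _ ∈ Ioi (0:ℝ) from p1)
    (show _ ∈ Ioi (0:ℝ) from p2) ha hb hab
  simp only [smul_eq_mul] at hl
  have p3 : 0 < a * h x ^ ((1 : ℝ) / m) + b * h y ^ ((1 : ℝ) / m) := by
    rcases ha.eq_or_lt with h0 | h0
    · have : b = 1 := by linarith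
      rw [← h0, this]; linarith
    · have := mul_pos h0 p1
      have := mul_nonneg hb p2.le
      linarith
  have := hl.trans (Real.log_le_log p3 hk)
  nlinarith [mul_le_mul_of_nonneg_left this hm'.le]

lemma aux_dense {F : ℝ → ℝ} {e1 e2 : ℝ} (hF : ConcaveOn ℝ (Ioo e1 e2) F) :
    ∀ x y, e1 ≤ x → x < y → y ≤ e2 →
      ∃ z ∈ {z | z ∈ Ioo e1 e2 ∧ DifferentiableAt ℝ F z}, x < z ∧ z < y := by
  intro x y h1 h2 h3
  have hL := hF.locallyLipschitzOn isOpen_Ioo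
  obtain ⟨c, hc⟩ := exists_between h2
  have hcI : c ∈ Ioo e1 e2 := ⟨by linarith [hc.1], by linarith [hc.2]⟩
  obtain ⟨K, t, ht, hKt⟩ := hL hcI
  rw [isOpen_Ioo.nhdsWithin_eq hcI] at ht
  obtain ⟨p, q, hpq, hsub⟩ := mem_nhds_iff_exists_Ioo_subset.1 (inter_mem ht (Ioo_mem_nhds hc.1 hc.2))
  have hK' : LipschitzOnWith K F (Ioo p q) := hKt.mono (fun z hz => (hsub hz).1)
  have hd := Measure.dense_of_ae hK'.ae_differentiableWithinAt_of_mem_real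
  obtain ⟨z, hz, hz1, hz2⟩ := hd.exists_between (show p < q by linarith [hpq.1, hpq.2])
  have hz3 := (hsub ⟨hz1, hz2⟩).2
  refine ⟨z, ⟨⟨by linarith [hz3.1], by linarith [hz3.2]⟩, ?_⟩, hz3.1, hz3.2⟩
  exact (hz ⟨hz1, hz2⟩).differentiableAt (Ioo_mem_nhds hz1 hz2)

lemma aux_anti {F : ℝ → ℝ} {e1 e2 : ℝ} (hF : ConcaveOn ℝ (Ioo e1 e2) F) {x y : ℝ}
    (hx : x ∈ Ioo e1 e2) (hy : y ∈ Ioo e1 e2) (hxy : x ≤ y)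
    (dx : DifferentiableAt ℝ F x) (dy : DifferentiableAt ℝ F y) : deriv F y ≤ deriv F x := by
  rcases hxy.eq_or_lt with rfl | hlt
  · exact le_rfl
  · exact (hF.deriv_le_slope hx hy hlt dy).trans (hF.slope_le_deriv hx hy hlt dx)

lemma aux_C {h : ℝ → ℝ} {e1 e2 a b s t : ℝ} (hF : ConcaveOn ℝ (Ioo e1 e2) (fun y => Real.log (h y)))
    (hpos : ∀ x ∈ Ioo e1 e2, 0 < h x) (hab1 : a < -(π / 16)) (hab2 : π / 16 < b)
    (hab : Icc a b ⊆ Ioo e1 e2) (hba : b - a ≤ π)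
    (hst : ∀ x ∈ Icc a b, h x = s * x + t) {x y : ℝ}
    (hx : x ∈ Ioo e1 e2) (hy : y ∈ Ioo e1 e2) (hxy : x < y)
    (dx : DifferentiableAt ℝ (fun y => Real.log (h y)) x)
    (dy : DifferentiableAt ℝ (fun y => Real.log (h y)) y) :
    (1 - min (h a) (h b) / max (h a) (h b)) ^ 2 / π ^ 2 *
        max (min y (π / 16) - max x (-(π / 16))) 0 ≤
      deriv (fun y => Real.log (h y)) x - deriv (fun y => Real.log (h y)) y := by
  have hpi := pi_pos
  set F : ℝ → ℝ := fun y => Real.log (h y) with hFd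
  have haI : a ∈ Icc a b := ⟨le_rfl, by linarith⟩
  have hbI : b ∈ Icc a b := ⟨by linarith, le_rfl⟩
  set M := max (h a) (h b) with hM
  set mn := min (h a) (h b) with hmn
  have hM0 : 0 < M := lt_max_of_lt_left (hpos a (hab haI))
  have hhM : ∀ z ∈ Icc a b, h z ≤ M := by
    intro z hz
    rcases le_total 0 s with h0 | h0
    · refine le_trans ?_ (le_max_right _ _)
      rw [hst z hz, hst b hbI]; nlinarith [hz.2]
    · refine le_trans ?_ (le_max_left _ _)
      rw [hst z hz, hst a haI]; nlinarith [hz.1]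
  have hdF : ∀ z ∈ Ioo a b, HasDerivAt F (s / h z) z := by
    intro z hz
    have hz' : z ∈ Icc a b := ⟨hz.1.le, hz.2.le⟩
    have h1 : HasDerivAt h s z := by
      have h2 : HasDerivAt (fun x : ℝ => s * x + t) s z := by
        simpa using ((hasDerivAt_id z).const_mul s).add_const t
      apply h2.congr_of_eventuallyEq
      filter_upwards [Icc_mem_nhds hz.1 hz.2] with w hw using hst w hw
    exact h1.log (hpos z (hab hz')).ne'
  rcases le_total (min y (π / 16) - max x (-(π / 16))) 0 with hneg | hge
  · rw [max_eq_right hneg, mul_zero]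
    linarith [aux_anti hF hx hy hxy.le dx dy]
  rw [max_eq_left hge]
  set x' := max x (-(π / 16)) with hx'
  set y' := min y (π / 16) with hy'
  have hx1 : x ≤ x' := le_max_left _ _
  have hx2 : -(π / 16) ≤ x' := le_max_right _ _
  have hy1 : y' ≤ y := min_le_left _ _
  have hy2 : y' ≤ π / 16 := min_le_right _ _
  have hxm : x' ∈ Ioo a b := ⟨by linarith, by linarith⟩
  have hym : y' ∈ Ioo a b := ⟨by linarith, by linarith⟩
  have hxm' : x' ∈ Icc a b := ⟨hxm.1.le, hxm.2.le⟩
  have hym' : y' ∈ Icc a b := ⟨hym.1.le, hym.2.le⟩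
  have q1 := aux_anti hF hx (hab hxm') hx1 dx (hdF x' hxm).differentiableAt
  have q2 := aux_anti hF (hab hym') hy hy1 (hdF y' hym).differentiableAt dy
  rw [(hdF x' hxm).deriv] at q1
  rw [(hdF y' hym).deriv] at q2
  have p1 := hpos _ (hab hxm')
  have p2 := hpos _ (hab hym')
  have e1 : s / h x' - s / h y' = s ^ 2 * (y' - x') / (h x' * h y') := by
    have : h y' - h x' = s * (y' - x') := by rw [hst _ hxm', hst _ hym']; ring
    rw [div_sub_div _ _ p1.ne' p2.ne']
    congr 1
    linear_combination s * this
  have hsM : (1 - mn / M) ^ 2 = s ^ 2 * (b - a) ^ 2 / M ^ 2 := by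
    have e2 : 1 - mn / M = (M - mn) / M := by field_simp
    have e3 : (M - mn) ^ 2 = (s * (b - a)) ^ 2 := by
      have e4 : M - mn = |h b - h a| := by
        rw [hM, hmn, max_sub_min_eq_abs]
      rw [e4, sq_abs, hst a haI, hst b hbI]; ring
    rw [e2, div_pow, e3]; ring
  have k1 : s ^ 2 * (y' - x') / (M * M) ≤ s ^ 2 * (y' - x') / (h x' * h y') := by
    apply div_le_div_of_nonneg_left (by positivity) (by positivity)
    exact mul_le_mul (hhM _ hxm') (hhM _ hym') p2.le hM0.le
  have k2 : (1 - mn / M) ^ 2 / π ^ 2 * (y' - x') ≤ s ^ 2 * (y' - x') / (M * M) := by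
    rw [hsM]
    have : (b - a) ^ 2 / π ^ 2 ≤ 1 := by
      rw [div_le_one (by positivity)]
      exact pow_le_pow_left₀ (by linarith) hba 2
    have e5 : s ^ 2 * (b - a) ^ 2 / M ^ 2 / π ^ 2 * (y' - x') =
        s ^ 2 * (y' - x') / (M * M) * ((b - a) ^ 2 / π ^ 2) := by field_simp
    rw [e5]
    apply mul_le_of_le_one_right _ this
    positivity
  linarith

lemma aux_fin {N G R Rf J : ℝ≥0∞} (hN : N ≠ ∞) (hJ : J ≠ ∞) {A c κ : ℝ}
    (hA : 1 ≤ A) (hc : 0 ≤ c) (hc1 : c ≤ 1) (hκ0 : 0 ≤ κ) (hκ : κ ≤ 2 * c / A)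
    (h1 : 4 * N ≤ G + 2 * Rf) (h2 : N ≤ Rf) (h3 : 4 * N ≤ G + ENNReal.ofReal A * J)
    (h4 : Rf + ENNReal.ofReal (c / 2) * J ≤ R) : (4 + ENNReal.ofReal κ) * N ≤ G + 2 * R := by
  by_cases hG : G = ∞
  · rw [hG, top_add]; exact le_top
  by_cases hR : R = ∞
  · rw [hR]; simp
  have hRf : Rf ≠ ∞ := fun h => hR (top_le_iff.1 (by rw [h, top_add] at h4; exact h4))
  have e2 : (2:ℝ≥0∞) = ENNReal.ofReal 2 := by norm_num
  have e4 : (4:ℝ≥0∞) = ENNReal.ofReal 4 := by norm_num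
  have hA0 : 0 < A := by linarith
  obtain ⟨n, n0, rfl⟩ : ∃ n : ℝ, 0 ≤ n ∧ N = ENNReal.ofReal n :=
    ⟨N.toReal, ENNReal.toReal_nonneg, (ENNReal.ofReal_toReal hN).symm⟩
  obtain ⟨g, g0, rfl⟩ : ∃ g : ℝ, 0 ≤ g ∧ G = ENNReal.ofReal g :=
    ⟨G.toReal, ENNReal.toReal_nonneg, (ENNReal.ofReal_toReal hG).symm⟩
  obtain ⟨r, r0, rfl⟩ : ∃ r : ℝ, 0 ≤ r ∧ R = ENNReal.ofReal r :=
    ⟨R.toReal, ENNReal.toReal_nonneg, (ENNReal.ofReal_toReal hR).symm⟩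
  obtain ⟨f, f0, rfl⟩ : ∃ f : ℝ, 0 ≤ f ∧ Rf = ENNReal.ofReal f :=
    ⟨Rf.toReal, ENNReal.toReal_nonneg, (ENNReal.ofReal_toReal hRf).symm⟩
  obtain ⟨j, j0, rfl⟩ : ∃ j : ℝ, 0 ≤ j ∧ J = ENNReal.ofReal j :=
    ⟨J.toReal, ENNReal.toReal_nonneg, (ENNReal.ofReal_toReal hJ).symm⟩
  rw [e4, e2, ← ENNReal.ofReal_mul (by norm_num), ← ENNReal.ofReal_mul (by norm_num),
    ← ENNReal.ofReal_add g0 (by positivity), ENNReal.ofReal_le_ofReal_iff (by positivity)] at h1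
  rw [ENNReal.ofReal_le_ofReal_iff f0] at h2
  rw [e4, ← ENNReal.ofReal_mul (by norm_num), ← ENNReal.ofReal_mul hA0.le,
    ← ENNReal.ofReal_add g0 (by positivity), ENNReal.ofReal_le_ofReal_iff (by positivity)] at h3
  rw [← ENNReal.ofReal_mul (by positivity),
    ← ENNReal.ofReal_add f0 (by positivity), ENNReal.ofReal_le_ofReal_iff r0] at h4
  rw [e4, e2, ← ENNReal.ofReal_add (by norm_num) hκ0, ← ENNReal.ofReal_mul (by positivity),
    ← ENNReal.ofReal_mul (by norm_num), ← ENNReal.ofReal_add g0 (by positivity)]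
  apply ENNReal.ofReal_le_ofReal
  set θ := c / A with hθ
  have t0 : 0 ≤ θ := by positivity
  have t1 : θ ≤ 1 := by rw [hθ, div_le_one hA0]; linarith
  have tA : θ * A = c := by rw [hθ]; field_simp
  have k2 : κ ≤ 2 * θ := by rw [hθ]; linarith [mul_div_assoc 2 c A]
  have q1 := mul_le_mul_of_nonneg_left h1 (sub_nonneg.2 t1)
  have q2 := mul_le_mul_of_nonneg_left h2 t0
  have q3 := mul_le_mul_of_nonneg_left h3 t0
  have q4 := mul_le_mul_of_nonneg_right k2 n0
  have q5 : θ * (A * j) = c * j := by rw [← mul_assoc, tA]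
  nlinarith

lemma aux_lmono {μ1 μ2 : Measure ℝ} {e1 e2 : ℝ}
    (h : ∀ S, MeasurableSet S → S ⊆ Ioo e1 e2 → μ1 S ≤ μ2 S) (g : ℝ → ℝ≥0∞) :
    ∫⁻ x in Ioo e1 e2, g x ∂μ1 ≤ ∫⁻ x in Ioo e1 e2, g x ∂μ2 := by
  apply lintegral_mono' _ le_rfl
  rw [Measure.le_iff]
  intro S hS
  rw [Measure.restrict_apply hS, Measure.restrict_apply hS]
  exact h _ (hS.inter measurableSet_Ioo) inter_subset_right

lemma aux_zero {u : ℝ → ℝ} (hu : Continuous u) {S : Set ℝ}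
    (hz : ∫⁻ x in S, ENNReal.ofReal (u x ^ 2) = 0) : ∀ᵐ x ∂(volume.restrict S), u x = 0 := by
  rw [lintegral_eq_zero_iff (by fun_prop)] at hz
  filter_upwards [hz] with x hx
  have : u x ^ 2 ≤ 0 := ENNReal.ofReal_eq_zero.1 hx
  exact pow_eq_zero_iff two_ne_zero |>.1 (le_antisymm this (sq_nonneg _))

lemma aux_van {u : ℝ → ℝ} (hu : Continuous u) {d : ℝ} (h0 : ∀ x ∉ Ioo (-(π / 2)) (π / 2), u x = 0)
    (hz : ∫⁻ x in Ioo (-(π / 2)) (π / 2) \ Ioo (-(d / 2)) (d / 2), ENNReal.ofReal (u x ^ 2) = 0)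
    (hd : 0 < d) :
    ∀ x ∉ Ioo (-(d / 2)) (d / 2), u x = 0 := by
  intro x hx
  by_cases hx' : x ∈ Ioo (-(π / 2)) (π / 2)
  swap
  · exact h0 x hx'
  have hae := aux_zero hu hz
  have hpi := pi_pos
  rcases le_or_gt (d / 2) x with h | h
  · have hs : Ico (d / 2) (π / 2) ⊆ Ioo (-(π / 2)) (π / 2) \ Ioo (-(d / 2)) (d / 2) :=
      fun t ht => ⟨⟨by linarith [ht.1], ht.2⟩, fun h => absurd ht.1 (not_le.2 h.2)⟩
    have h1 : ∀ᵐ x ∂(volume.restrict (Ico (d / 2) (π / 2))), u x = 0 :=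
      ae_restrict_of_ae_restrict_of_subset hs hae
    exact Measure.eqOn_Ico_of_ae_eq volume (g := fun _ => (0:ℝ)) h1 hu.continuousOn
      continuousOn_const ⟨h, hx'.2⟩
  · have h3 : x ≤ -(d / 2) := by
      by_contra hcon
      exact hx ⟨not_le.1 hcon, h⟩
    have hs : Ioc (-(π / 2)) (-(d / 2)) ⊆ Ioo (-(π / 2)) (π / 2) \ Ioo (-(d / 2)) (d / 2) :=
      fun t ht => ⟨⟨ht.1, by linarith [ht.2]⟩, fun h => absurd ht.2 (not_le.2 h.1)⟩
    have h1 : ∀ᵐ x ∂(volume.restrict (Ioc (-(π / 2)) (-(d / 2)))), u x = 0 :=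
      ae_restrict_of_ae_restrict_of_subset hs hae
    exact Measure.eqOn_Ioc_of_ae_eq volume (g := fun _ => (0:ℝ)) h1 hu.continuousOn
      continuousOn_const ⟨hx'.1, h3⟩


/-- Proposition 2.10 / `p:terza`: there exists an absolute constant
`K > 0` such that the following holds. Let `ψ ∈ 𝒜(I_π)` be of the form `ψ = f + g/2`,
where `f ∈ 𝒜(I_π)` with `dom f = I_d ⊆ I_π`, and `g = -(log h)'` on `I_d` for some
`(1/m)`-concave function `h`, affine on an interval `[a,b]` with `I_{π/4} ⊆ [a,b] ⊆ I_d`.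
If `λ₁(I_d, 2ψ') ≤ 15`, then
`λ₁(I_d, 2ψ') ≥ 4 + (16K/(mπ²))·(1 - min{h(a),h(b)}/max{h(a),h(b)})²`. -/
theorem refined_lower_bound_two_psi_deriv :
    ∃ K : ℝ, 0 < K ∧
      ∀ d : ℝ, 0 < d → d ≤ π →
        ∀ m : ℕ, 0 < m →
          ∀ (h : ℝ → ℝ) (a b : ℝ),
            Ioo (-(π / 8)) (π / 8) ⊆ Icc a b →
            Icc a b ⊆ Ioo (-(d / 2)) (d / 2) →
            (∀ x ∈ Ioo (-(d / 2)) (d / 2), 0 < h x) →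
            ConcaveOn ℝ (Ioo (-(d / 2)) (d / 2)) (fun x => h x ^ ((1 : ℝ) / m)) →
            (∃ s t : ℝ, ∀ x ∈ Icc a b, h x = s * x + t) →
            ∀ P Pf : PsiA,
              P.dom = Ioo (-(d / 2)) (d / 2) →
              Pf.dom = Ioo (-(d / 2)) (d / 2) →
              (∀ x ∈ Ioo (-(d / 2)) (d / 2),
                P.psi x = Pf.psi x + (-(deriv (fun y => Real.log (h y)) x)) / 2) →
              lam1 (-(π / 2)) (π / 2) ((2 : ℝ≥0∞) • P.derivM) ≤ 15 →
              4 + ENNReal.ofReal (16 * K / (m * π ^ 2) *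
                  (1 - min (h a) (h b) / max (h a) (h b)) ^ 2) ≤
                lam1 (-(π / 2)) (π / 2) ((2 : ℝ≥0∞) • P.derivM) := by

  obtain ⟨A, hA1, hB⟩ := aux_B
  have hpi := pi_pos
  have hA0 : 0 < A := by linarith
  refine ⟨1 / (8 * A), by positivity, ?_⟩
  intro d hd hdπ m hm h a b hsub1 hsub2 hpos hconc hst P Pf hPd hPfd hψ _
  obtain ⟨s, t, hst⟩ := hst
  have ha1 : a < -(π / 16) := by
    have := (hsub1 (show -(π / 12) ∈ Ioo (-(π / 8)) (π / 8) from ⟨by linarith, by linarith⟩)).1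
    linarith
  have hb1 : π / 16 < b := by
    have := (hsub1 (show π / 12 ∈ Ioo (-(π / 8)) (π / 8) from ⟨by linarith, by linarith⟩)).2
    linarith
  have haI := hsub2 (show a ∈ Icc a b from ⟨le_rfl, by linarith⟩)
  have hbI := hsub2 (show b ∈ Icc a b from ⟨by linarith, le_rfl⟩)
  have hba : b - a ≤ π := by linarith [haI.1, hbI.2]
  have hF := aux_logc hm hpos hconc
  set c := (1 - min (h a) (h b) / max (h a) (h b)) ^ 2 / π ^ 2 with hc
  have hratio : 0 ≤ min (h a) (h b) / max (h a) (h b) ∧ min (h a) (h b) / max (h a) (h b) ≤ 1 := by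
    have p1 := hpos a haI
    have p2 := hpos b hbI
    have p3 : 0 < max (h a) (h b) := lt_max_of_lt_left p1
    refine ⟨div_nonneg (le_min p1.le p2.le) p3.le, ?_⟩
    rw [div_le_one p3]
    exact min_le_max
  have hc0 : 0 ≤ c := by positivity
  have hc1 : c ≤ 1 := by
    rw [hc, div_le_one (by positivity)]
    nlinarith [pi_gt_three, hratio.1, hratio.2]
  -- facts on the measures
  have hnu : ∀ x y, -(d / 2) < x → x ≤ y → y < d / 2 →
      P.nu (Ioc x y) = ENNReal.ofReal (P.psi y - P.psi x) := fun x y h1 h2 h3 =>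
    P.nu_eq (by rw [hPd]; exact ⟨h1, by linarith⟩) (by rw [hPd]; exact ⟨by linarith, h3⟩) h2
  have hnuf : ∀ x y, -(d / 2) < x → x ≤ y → y < d / 2 →
      Pf.nu (Ioc x y) = ENNReal.ofReal (Pf.psi y - Pf.psi x) := fun x y h1 h2 h3 =>
    Pf.nu_eq (by rw [hPfd]; exact ⟨h1, by linarith⟩) (by rw [hPfd]; exact ⟨by linarith, h3⟩) h2
  have hgap : ∀ x y, -(d / 2) < x → x ≤ y → y < d / 2 →
      2 * tan ((y - x) / 2) ≤ Pf.psi y - Pf.psi x := by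
    intro x y h1 h2 h3
    rcases h2.eq_or_lt with rfl | h2
    · simp
    · exact Pf.gap (by rw [hPfd]; exact ⟨h1, by linarith⟩) (by rw [hPfd]; exact ⟨by linarith, h3⟩) h2
  have hvol : ∀ S, MeasurableSet S → S ⊆ Ioo (-(d / 2)) (d / 2) → volume S ≤ Pf.nu S := by
    apply aux_cmp volume Pf.nu univ
    · intro x y _ hxy _
      obtain ⟨z, hz⟩ := exists_between hxy
      exact ⟨z, mem_univ _, hz⟩
    · intro x _ y _ h1 h2 h3
      rw [hnuf x y h1 h2.le h3, Real.volume_Ioc]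
      apply ENNReal.ofReal_le_ofReal
      have := le_tan (show 0 ≤ (y - x) / 2 by linarith) (by linarith)
      linarith [hgap x y h1 h2.le h3]
    · intro x y h1 h2 h3
      rw [hnuf x y h1 h2.le h3]; exact ENNReal.ofReal_ne_top
  have hCm : ∀ S, MeasurableSet S → S ⊆ Ioo (-(d / 2)) (d / 2) →
      (Pf.nu + ENNReal.ofReal (c / 2) • volume.restrict (Ioo (-(π / 16)) (π / 16))) S ≤ P.nu S := by
    apply aux_cmp _ P.nu _ (aux_dense hF)
    · intro x hx y hy h1 h2 h3
      have hCxy := aux_C hF hpos ha1 hb1 hsub2 hba hst hx.1 hy.1 h2 hx.2 hy.2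
      rw [← hc] at hCxy
      have hv : volume (Ioc x y ∩ Ioo (-(π / 16)) (π / 16)) ≤
          ENNReal.ofReal (max (min y (π / 16) - max x (-(π / 16))) 0) := by
        refine (measure_mono (t := Icc (max x (-(π / 16))) (min y (π / 16))) ?_).trans ?_
        · intro z hz
          exact ⟨max_le hz.1.1.le hz.2.1.le, le_min hz.1.2 hz.2.2.le⟩
        · rw [Real.volume_Icc]
          exact ENNReal.ofReal_le_ofReal (le_max_left _ _)
      have hfn : 0 ≤ Pf.psi y - Pf.psi x := by
        have := tan_nonneg_of_nonneg_of_le_pi_div_two (show 0 ≤ (y - x) / 2 by linarith) (by linarith)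
        linarith [hgap x y h1 h2.le h3]
      rw [Measure.add_apply, Measure.smul_apply, Measure.restrict_apply measurableSet_Ioc,
        hnu x y h1 h2.le h3, hnuf x y h1 h2.le h3, smul_eq_mul, hψ x hx.1, hψ y hy.1]
      refine (add_le_add le_rfl (mul_le_mul_right hv _)).trans ?_
      rw [← ENNReal.ofReal_mul (by positivity), ← ENNReal.ofReal_add hfn
        (mul_nonneg (by positivity) (le_max_right _ _))]
      apply ENNReal.ofReal_le_ofReal
      linarith
    · intro x y h1 h2 h3
      rw [hnu x y h1 h2.le h3]; exact ENNReal.ofReal_ne_top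
  -- the Rayleigh quotient
  unfold lam1
  refine le_iInf fun u => le_iInf fun hu => ?_
  obtain ⟨⟨hu1, hu0⟩, hN0⟩ := hu
  have huc : Continuous u := hu1.continuous
  have hcd : Continuous (deriv u) := hu1.continuous_deriv le_rfl
  unfold dirRQ
  have hsubI : Ioo (-(d / 2)) (d / 2) ⊆ Ioo (-(π / 2)) (π / 2) :=
    Ioo_subset_Ioo (by linarith) (by linarith)
  have hNt : ∫⁻ x in Ioo (-(π / 2)) (π / 2), ENNReal.ofReal (u x ^ 2) ≠ ∞ := by
    rw [aux_lint (by fun_prop) (fun x => sq_nonneg _) (by linarith)]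
    exact ENNReal.ofReal_ne_top
  rw [ENNReal.le_div_iff_mul_le (Or.inl hN0) (Or.inl hNt)]
  have hdec : ∫⁻ x in Ioo (-(π / 2)) (π / 2), ENNReal.ofReal (u x ^ 2) ∂((2 : ℝ≥0∞) • P.derivM) =
      2 * ((∫⁻ x in Ioo (-(d / 2)) (d / 2), ENNReal.ofReal (u x ^ 2) ∂P.nu) +
       ∞ * ∫⁻ x in Ioo (-(π / 2)) (π / 2) \ Ioo (-(d / 2)) (d / 2), ENNReal.ofReal (u x ^ 2)) := by
    unfold PsiA.derivM
    rw [hPd, Measure.restrict_smul, lintegral_smul_measure, Measure.restrict_add,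
      lintegral_add_measure, Measure.restrict_smul, lintegral_smul_measure,
      Measure.restrict_restrict measurableSet_Ioo, Measure.restrict_restrict measurableSet_Ioo,
      inter_eq_right.2 hsubI, inter_eq_right.2 diff_subset, smul_eq_mul, smul_eq_mul]
  rw [hdec]
  by_cases hz : ∫⁻ x in Ioo (-(π / 2)) (π / 2) \ Ioo (-(d / 2)) (d / 2), ENNReal.ofReal (u x ^ 2) = 0
  swap
  · rw [ENNReal.top_mul hz]; simp
  rw [hz, mul_zero, add_zero]
  have hu0' := aux_van huc hu0 hz hd
  have hNI : ∫⁻ x in Ioo (-(π / 2)) (π / 2), ENNReal.ofReal (u x ^ 2) =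
      ∫⁻ x in Ioo (-(d / 2)) (d / 2), ENNReal.ofReal (u x ^ 2) := by
    rw [← lintegral_inter_add_diff _ (Ioo (-(π / 2)) (π / 2)) (measurableSet_Ioo (a := -(d / 2)) (b := d / 2)),
      hz, add_zero, inter_eq_right.2 hsubI]
  have hGm : ∫⁻ x in Ioo (-(d / 2)) (d / 2), ENNReal.ofReal (deriv u x ^ 2) ≤
      ∫⁻ x in Ioo (-(π / 2)) (π / 2), ENNReal.ofReal (deriv u x ^ 2) := lintegral_mono_set hsubI
  have fA := aux_A Pf.nu hu1 (e1 := -(d / 2)) (e2 := d / 2) (by linarith) (by linarith) hu0'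
    (fun x y h1 h2 h3 => by
      rw [hnuf x y h1 h2 h3]; exact ENNReal.ofReal_le_ofReal (hgap x y h1 h2 h3))
    (fun x y h1 h2 h3 => by rw [hnuf x y h1 h2 h3]; exact ENNReal.ofReal_ne_top)
  have fV := aux_lmono hvol (fun x => ENNReal.ofReal (u x ^ 2))
  have fC := aux_lmono hCm (fun x => ENNReal.ofReal (u x ^ 2))
  have hJI : Ioo (-(π / 16)) (π / 16) ⊆ Ioo (-(d / 2)) (d / 2) :=
    Ioo_subset_Ioo (by linarith [haI.1]) (by linarith [hbI.2])
  rw [Measure.restrict_add, lintegral_add_measure, Measure.restrict_smul, lintegral_smul_measure,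
    Measure.restrict_restrict measurableSet_Ioo, inter_eq_right.2 hJI, smul_eq_mul] at fC
  have fB : 4 * ∫⁻ x in Ioo (-(π / 2)) (π / 2), ENNReal.ofReal (u x ^ 2) ≤
      (∫⁻ x in Ioo (-(π / 2)) (π / 2), ENNReal.ofReal (deriv u x ^ 2)) +
      ENNReal.ofReal A * ∫⁻ x in Ioo (-(π / 16)) (π / 16), ENNReal.ofReal (u x ^ 2) := by
    rw [aux_lint (by fun_prop) (fun x => sq_nonneg _) (by linarith),
      aux_lint (by fun_prop) (fun x => sq_nonneg _) (by linarith),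
      aux_lint (by fun_prop) (fun x => sq_nonneg _) (by linarith),
      show (4:ℝ≥0∞) = ENNReal.ofReal 4 by norm_num, ← ENNReal.ofReal_mul (by norm_num),
      ← ENNReal.ofReal_mul hA0.le, ← ENNReal.ofReal_add
        (intervalIntegral.integral_nonneg (by linarith) (fun x _ => sq_nonneg _))
        (mul_nonneg hA0.le (intervalIntegral.integral_nonneg (by linarith) (fun x _ => sq_nonneg _)))]
    exact ENNReal.ofReal_le_ofReal (hB u hu1 hu0)
  have hJt : ∫⁻ x in Ioo (-(π / 16)) (π / 16), ENNReal.ofReal (u x ^ 2) ≠ ∞ := by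
    rw [aux_lint (by fun_prop) (fun x => sq_nonneg _) (by linarith)]
    exact ENNReal.ofReal_ne_top
  have hm1 : (1:ℝ) ≤ m := by exact_mod_cast hm
  refine aux_fin hNt hJt hA1 hc0 hc1 (by positivity) ?_ ?_ ?_ fB fC
  · have : 16 * (1 / (8 * A)) / (m * π ^ 2) * (1 - min (h a) (h b) / max (h a) (h b)) ^ 2
        = 2 * c / A / m := by rw [hc]; field_simp; ring
    rw [this]
    exact div_le_self (by positivity) hm1
  · rw [hNI]
    exact fA.trans (add_le_add hGm le_rfl)
  · rw [hNI]; exact fV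
end
end

section
/- There exists a dimensional constant Λ > 0 such that: if Ω ⊂ ℝ² is an open bounded convex set with diameter D, width w ≤ (√3/2)D, and first two Dirichlet eigenfunctions u₁, u₂, and ω is a cell of a u₁²-weighted L² equipartition of ū = u₂/u₁ in Ω composed of n cells, then, in an orthogonal coordinate system in which a diameter of Ω is the horizontal segment (−D/2, D/2) × {0}, the vertical sections ω_{x₁} := ω ∩ ({x₁} × ℝ) satisfy sup_{x₁ ∈ (−D/2, D/2)} ℋ¹(ω_{x₁}) ≥ Λ w/n. -/
open MeasureTheory Real Set Filter Bornology
open scoped ENNReal RealInnerProductSpace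

noncomputable section

/-- Dirichlet Rayleigh quotient of `u` on `Ω ⊆ ℝ^N`. -/
def dRayleigh {N : ℕ} (Ω : Set (EuclideanSpace ℝ (Fin N)))
    (u : EuclideanSpace ℝ (Fin N) → ℝ) : ℝ≥0∞ :=
  (∫⁻ x in Ω, ENNReal.ofReal (‖fderiv ℝ u x‖ ^ 2)) /
    ∫⁻ x in Ω, ENNReal.ofReal ((u x) ^ 2)

/-- The `k`-th Dirichlet Laplacian eigenvalue of `Ω`, via the Courant–Fischer min-max
over `k`-dimensional subspaces of (a core of) `H¹₀(Ω)`. -/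
def dirEV {N : ℕ} (Ω : Set (EuclideanSpace ℝ (Fin N))) (k : ℕ) : ℝ≥0∞ :=
  ⨅ (S : Submodule ℝ (EuclideanSpace ℝ (Fin N) → ℝ))
    (_ : Module.finrank ℝ S = k ∧ ∀ u ∈ S, ContDiff ℝ 1 u ∧ tsupport u ⊆ Ω),
    ⨆ (u : EuclideanSpace ℝ (Fin N) → ℝ) (_ : u ∈ S ∧ u ≠ 0), dRayleigh Ω u

/-- Weighted Rayleigh quotient of `u` on `Ω` with weight `p`. -/
def wRayleigh {N : ℕ} (Ω : Set (EuclideanSpace ℝ (Fin N)))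
    (p u : EuclideanSpace ℝ (Fin N) → ℝ) : ℝ≥0∞ :=
  (∫⁻ x in Ω, ENNReal.ofReal (‖fderiv ℝ u x‖ ^ 2 * p x)) /
    ∫⁻ x in Ω, ENNReal.ofReal ((u x) ^ 2 * p x)

/-- Admissibility of `u` for the weighted Neumann eigenvalue `μ₁(Ω, p)`:
`u ∈ H¹_loc(Ω) ∩ L²(Ω, p dx)`, `u ≠ 0`, with zero `p`-mean. -/
def wAdm {N : ℕ} (Ω : Set (EuclideanSpace ℝ (Fin N)))
    (p u : EuclideanSpace ℝ (Fin N) → ℝ) : Prop :=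
  ContDiffOn ℝ 1 u Ω ∧
    (∫⁻ x in Ω, ENNReal.ofReal ((u x) ^ 2 * p x)) ≠ 0 ∧
    (∫⁻ x in Ω, ENNReal.ofReal ((u x) ^ 2 * p x)) ≠ ∞ ∧
    (∫ x in Ω, u x * p x) = 0

/-- `μ₁(Ω, p)`, the first nontrivial weighted Neumann eigenvalue of `Ω`.
For `p ≡ 1` this is the first nontrivial Neumann Laplacian eigenvalue. -/
def wEV {N : ℕ} (Ω : Set (EuclideanSpace ℝ (Fin N)))
    (p : EuclideanSpace ℝ (Fin N) → ℝ) : ℝ≥0∞ :=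
  ⨅ (u : EuclideanSpace ℝ (Fin N) → ℝ) (_ : wAdm Ω p u), wRayleigh Ω p u

/-- The width of `Ω`: the minimal distance between two parallel supporting hyperplanes,
i.e. the infimum over unit directions of the breadth of `Ω` in that direction. -/
def width {N : ℕ} (Ω : Set (EuclideanSpace ℝ (Fin N))) : ℝ :=
  ⨅ v : Metric.sphere (0 : EuclideanSpace ℝ (Fin N)) 1,
    (sSup ((fun x => ⟪x, (v : EuclideanSpace ℝ (Fin N))⟫) '' Ω) -
      sInf ((fun x => ⟪x, (v : EuclideanSpace ℝ (Fin N))⟫) '' Ω))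

/-- `u` is a first Dirichlet eigenfunction of `Ω` (positive, `L²`-normalized):
it lies in (an avatar of) `H¹₀(Ω)` and achieves `λ₁(Ω)` as a Rayleigh quotient. -/
def IsFirstDirichletEF {N : ℕ} (Ω : Set (EuclideanSpace ℝ (Fin N)))
    (u : EuclideanSpace ℝ (Fin N) → ℝ) : Prop :=
  Continuous u ∧ (∀ x ∉ Ω, u x = 0) ∧ ContDiffOn ℝ 1 u Ω ∧
    (∫⁻ x in Ω, ENNReal.ofReal (‖fderiv ℝ u x‖ ^ 2)) ≠ ∞ ∧
    (∀ x ∈ Ω, 0 < u x) ∧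
    (∫⁻ x in Ω, ENNReal.ofReal ((u x) ^ 2)) = 1 ∧
    dRayleigh Ω u = dirEV Ω 1

/-- `u2` is a second Dirichlet eigenfunction of `Ω` (`L²`-normalized, orthogonal to the
first eigenfunction `u1`), achieving `λ₂(Ω)` as a Rayleigh quotient. -/
def IsSecondDirichletEF {N : ℕ} (Ω : Set (EuclideanSpace ℝ (Fin N)))
    (u1 u2 : EuclideanSpace ℝ (Fin N) → ℝ) : Prop :=
  Continuous u2 ∧ (∀ x ∉ Ω, u2 x = 0) ∧ ContDiffOn ℝ 1 u2 Ω ∧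
    (∫⁻ x in Ω, ENNReal.ofReal (‖fderiv ℝ u2 x‖ ^ 2)) ≠ ∞ ∧
    (∫ x in Ω, u1 x * u2 x) = 0 ∧
    (∫⁻ x in Ω, ENNReal.ofReal ((u2 x) ^ 2)) = 1 ∧
    dRayleigh Ω u2 = dirEV Ω 2

/-- A `p`-weighted `L²` equipartition of `u` in `ω`. -/
def IsL2Equipartition {N : ℕ} (ω : Set (EuclideanSpace ℝ (Fin N)))
    (p u : EuclideanSpace ℝ (Fin N) → ℝ) (n : ℕ)
    (c : Fin n → Set (EuclideanSpace ℝ (Fin N))) : Prop :=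
  (∀ i, Convex ℝ (c i) ∧ IsOpen (c i) ∧ c i ⊆ ω) ∧
    (Pairwise fun i j => Disjoint (c i) (c j)) ∧
    volume (ω \ ⋃ i, c i) = 0 ∧
    ∀ i, (∫ x in c i, u x * p x) = 0 ∧
      (∫⁻ x in c i, ENNReal.ofReal ((u x) ^ 2 * p x)) =
        (∫⁻ x in ω, ENNReal.ofReal ((u x) ^ 2 * p x)) / n

lemma aux_oneD (O : Set ℝ) (hO : IsOpen O) (hb : BddBelow O) (g g' : ℝ → ℝ) (hg : Continuous g)
    (h0 : ∀ y ∉ O, g y = 0) (hd : ∀ y ∈ O, HasDerivAt g (g' y) y) (hm : Measurable g')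
    (F : ℝ → ℝ≥0∞) (hF : ∀ y ∈ O, ‖2 * g y * g' y‖ₑ ≤ F y) (y : ℝ) :
    ENNReal.ofReal (g y ^ 2) ≤ ∫⁻ z in O, F z := by
  by_cases hy : y ∈ O
  swap
  · simp [h0 y hy]
  obtain ⟨m, hmb⟩ := hb
  set S : Set ℝ := Iic y ∩ Oᶜ with hS
  have hScl : IsClosed S := isClosed_Iic.inter hO.isClosed_compl
  have hne : S.Nonempty := by
    refine ⟨min y (m - 1), mem_Iic.mpr (min_le_left _ _), fun h => ?_⟩
    have h1 := hmb h
    have h2 := min_le_right y (m - 1)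
    linarith
  have hbdd : BddAbove S := ⟨y, fun z hz => hz.1⟩
  set α := sSup S with hα
  have hαS : α ∈ S := hScl.csSup_mem hne hbdd
  have hαy : α ≤ y := hαS.1
  have hsub : Ioc α y ⊆ O := by
    intro z hz
    by_contra hzO
    have : z ≤ α := le_csSup hbdd ⟨hz.2, hzO⟩
    exact absurd hz.1 (not_lt.mpr this)
  have hle : ∫⁻ z in Ioc α y, ‖2 * g z * g' z‖ₑ ≤ ∫⁻ z in O, F z :=
    (lintegral_mono_set hsub).trans (setLIntegral_mono' hO.measurableSet hF)
  by_cases htop : ∫⁻ z in Ioc α y, ‖2 * g z * g' z‖ₑ = ∞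
  · rw [htop, top_le_iff] at hle
    rw [hle]; exact le_top
  have hint : IntegrableOn (fun z => 2 * g z * g' z) (Ioc α y) := by
    refine ⟨((measurable_const.mul hg.measurable).mul hm).aestronglyMeasurable, ?_⟩
    exact lt_top_iff_ne_top.mpr htop
  have hint' : IntervalIntegrable (fun z => 2 * g z * g' z) volume α y :=
    (intervalIntegrable_iff_integrableOn_Ioc_of_le hαy).mpr hint
  have hftc := intervalIntegral.integral_eq_sub_of_hasDerivAt_of_le (f := fun z => g z ^ 2)
    (f' := fun z => 2 * g z * g' z) hαy (hg.pow 2).continuousOn (fun z hz => by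
      have := (hd z (hsub ⟨hz.1, hz.2.le⟩)).pow 2
      have h2 : (fun z => g z ^ 2) = g ^ 2 := rfl
      rw [h2]
      simpa using this) hint'
  simp only [h0 α hαS.2] at hftc
  rw [intervalIntegral.integral_of_le hαy] at hftc
  have h3 : g y ^ 2 = ∫ z in Ioc α y, 2 * g z * g' z := by rw [hftc]; ring
  calc ENNReal.ofReal (g y ^ 2) = ‖g y ^ 2‖ₑ := by
        rw [Real.enorm_eq_ofReal (sq_nonneg _)]
    _ ≤ ∫⁻ z in Ioc α y, ‖2 * g z * g' z‖ₑ := by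
        rw [h3]; exact enorm_integral_le_lintegral_enorm _
    _ ≤ _ := hle

/-- the point with coordinates `(t, y)` -/
def auxPt (t y : ℝ) : EuclideanSpace ℝ (Fin 2) := !₂[t, y]

lemma auxPt_mp : MeasurePreserving (fun p : ℝ × ℝ => auxPt p.1 p.2) := by
  have h1 := (volume_preserving_finTwoArrow ℝ).symm
  have h2 := PiLp.volume_preserving_toLp (Fin 2)
  exact h2.comp h1

lemma auxPt_cont : Continuous (fun p : ℝ × ℝ => auxPt p.1 p.2) := by
  unfold auxPt
  fun_prop

lemma aux_fubini (f : EuclideanSpace ℝ (Fin 2) → ℝ≥0∞) (hf : Measurable f)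
    (A : Set (EuclideanSpace ℝ (Fin 2))) (hA : MeasurableSet A) :
    ∫⁻ x in A, f x = ∫⁻ t : ℝ, ∫⁻ y in {y | auxPt t y ∈ A}, f (auxPt t y) := by
  have hm : Measurable (A.indicator f) := hf.indicator hA
  rw [← lintegral_indicator hA, ← auxPt_mp.lintegral_comp hm]
  have hm2 : Measurable fun p : ℝ × ℝ => A.indicator f (auxPt p.1 p.2) :=
    hm.comp auxPt_mp.measurable
  rw [Measure.volume_eq_prod, lintegral_prod _ hm2.aemeasurable]
  refine lintegral_congr fun t => ?_
  have hmt : Measurable (auxPt t) := auxPt_mp.measurable.comp measurable_prodMk_left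
  have hset : MeasurableSet {y | auxPt t y ∈ A} := hmt hA
  rw [← lintegral_indicator hset]
  rfl

lemma aux_slice (A : Set (EuclideanSpace ℝ (Fin 2))) (t : ℝ) :
    volume {y | auxPt t y ∈ A} ≤ μH[(1 : ℝ)] (A ∩ {x : EuclideanSpace ℝ (Fin 2) | x 0 = t}) := by
  have hL : LipschitzWith 1 (fun x : EuclideanSpace ℝ (Fin 2) => x 1) := by
    refine LipschitzWith.of_dist_le_mul fun x y => ?_
    have := PiLp.norm_apply_le (x - y) 1
    simpa [dist_eq_norm] using this
  have h := hL.hausdorffMeasure_image_le (d := 1) zero_le_one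
    (A ∩ {x : EuclideanSpace ℝ (Fin 2) | x 0 = t})
  rw [hausdorffMeasure_real] at h
  simp only [ENNReal.coe_one, ENNReal.one_rpow, one_mul] at h
  refine le_trans (measure_mono ?_) h
  intro y hy
  exact ⟨auxPt t y, ⟨hy, by simp [auxPt]⟩, by simp [auxPt]⟩

lemma aux_main (Ω A : Set (EuclideanSpace ℝ (Fin 2))) (hO : IsOpen Ω) (hB : IsBounded Ω)
    (hA : MeasurableSet A) (u : EuclideanSpace ℝ (Fin 2) → ℝ) (hu : Continuous u)
    (hu0 : ∀ x ∉ Ω, u x = 0) (hud : ContDiffOn ℝ 1 u Ω) (H : ℝ≥0∞)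
    (hH : ∀ t, volume {y | auxPt t y ∈ A} ≤ H) (k : ℝ) (hk : 0 < k) :
    ∫⁻ x in A, ENNReal.ofReal (u x ^ 2) ≤
      H * (ENNReal.ofReal k * (∫⁻ x in Ω, ENNReal.ofReal (u x ^ 2)) +
        ENNReal.ofReal k⁻¹ * ∫⁻ x in Ω, ENNReal.ofReal (‖fderiv ℝ u x‖ ^ 2)) := by
  have hmu : Measurable fun x => ENNReal.ofReal (u x ^ 2) := by
    have := hu.measurable
    fun_prop
  have hmf : Measurable fun x => ENNReal.ofReal (‖fderiv ℝ u x‖ ^ 2) := by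
    have := measurable_fderiv ℝ u
    fun_prop
  set F : EuclideanSpace ℝ (Fin 2) → ℝ≥0∞ := fun x => ENNReal.ofReal k * ENNReal.ofReal (u x ^ 2) +
    ENNReal.ofReal k⁻¹ * ENNReal.ofReal (‖fderiv ℝ u x‖ ^ 2) with hF
  have hmF : Measurable F := (hmu.const_mul _).add (hmf.const_mul _)
  have hsum : ∫⁻ x in Ω, F x = ENNReal.ofReal k * (∫⁻ x in Ω, ENNReal.ofReal (u x ^ 2)) +
        ENNReal.ofReal k⁻¹ * ∫⁻ x in Ω, ENNReal.ofReal (‖fderiv ℝ u x‖ ^ 2) := by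
    rw [hF, lintegral_add_left (hmu.const_mul _), lintegral_const_mul _ hmu,
      lintegral_const_mul _ hmf]
  rw [← hsum, aux_fubini _ hmu A hA, aux_fubini _ hmF Ω hO.measurableSet]
  have hmt : ∀ t, Continuous (auxPt t) := fun t => by unfold auxPt; fun_prop
  have key : ∀ t y, ENNReal.ofReal (u (auxPt t y) ^ 2) ≤
      ∫⁻ z in {y | auxPt t y ∈ Ω}, F (auxPt t z) := by
    intro t y
    have hline : ∀ z, HasDerivAt (auxPt t) (auxPt 0 1) z := by
      intro z
      have : HasDerivAt (fun z => auxPt t 0 + z • auxPt 0 1) ((1 : ℝ) • auxPt 0 1) z :=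
        ((hasDerivAt_id z).smul_const _).const_add _
      rw [one_smul] at this
      convert this using 1
      ext z i
      fin_cases i <;> simp [auxPt]
    have hn : ‖auxPt 0 1‖ = 1 := by simp [auxPt, EuclideanSpace.norm_eq]
    refine aux_oneD {y | auxPt t y ∈ Ω} (hO.preimage (hmt t)) ?_ (fun z => u (auxPt t z))
      (fun z => fderiv ℝ u (auxPt t z) (auxPt 0 1)) (hu.comp (hmt t)) (fun z hz => hu0 _ hz)
      ?_ ?_ (fun z => F (auxPt t z)) ?_ y
    · obtain ⟨R, hR⟩ := hB.exists_norm_le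
      refine ⟨-R, fun z hz => ?_⟩
      have h1 := hR _ hz
      have h2 := PiLp.norm_apply_le (auxPt t z) 1
      have h3 : ‖z‖ ≤ R := by simpa [auxPt] using h2.trans h1
      exact (abs_le.mp h3).1
    · intro z hz
      have hda : DifferentiableAt ℝ u (auxPt t z) :=
        (hud.differentiableOn one_ne_zero).differentiableAt (hO.mem_nhds hz)
      exact hda.hasFDerivAt.comp_hasDerivAt z (hline z)
    · have h1 := measurable_fderiv_apply_const ℝ u (auxPt 0 1)
      exact h1.comp (hmt t).measurable
    · intro z hz
      simp only [hF]
      set a := u (auxPt t z)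
      set L := fderiv ℝ u (auxPt t z)
      have hL : |L (auxPt 0 1)| ≤ ‖L‖ := by
        have := L.le_opNorm (auxPt 0 1)
        rwa [hn, mul_one] at this
      rw [← ENNReal.ofReal_mul hk.le, ← ENNReal.ofReal_mul (inv_pos.mpr hk).le,
        ← ENNReal.ofReal_add (by positivity) (by positivity), ← ofReal_norm]
      refine ENNReal.ofReal_le_ofReal ?_
      rw [Real.norm_eq_abs, abs_mul, abs_mul, abs_two]
      have h1 : 2 * |a| * |L (auxPt 0 1)| ≤ 2 * |a| * ‖L‖ := by gcongr
      have h2 : k * a ^ 2 + k⁻¹ * ‖L‖ ^ 2 - 2 * |a| * ‖L‖ = k⁻¹ * (k * |a| - ‖L‖) ^ 2 := by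
        rw [← sq_abs a]; field_simp; ring
      have h3 : 0 ≤ k⁻¹ * (k * |a| - ‖L‖) ^ 2 := by positivity
      linarith
  calc _ ≤ ∫⁻ t : ℝ, H * ∫⁻ z in {y | auxPt t y ∈ Ω}, F (auxPt t z) := by
        refine lintegral_mono fun t => ?_
        calc _ ≤ ∫⁻ y in {y | auxPt t y ∈ A}, ∫⁻ z in {y | auxPt t y ∈ Ω}, F (auxPt t z) :=
              lintegral_mono fun y => key t y
          _ = (∫⁻ z in {y | auxPt t y ∈ Ω}, F (auxPt t z)) * volume {y | auxPt t y ∈ A} := by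
              rw [setLIntegral_const]
          _ ≤ _ := by rw [mul_comm]; exact mul_le_mul_left (hH t) _
    _ = _ := by
        refine lintegral_const_mul _ ?_
        have hm : Measurable (Ω.indicator F) := hmF.indicator hO.measurableSet
        have h2 : Measurable fun t => ∫⁻ z, Ω.indicator F (auxPt t z) :=
          (hm.comp auxPt_mp.measurable).lintegral_prod_right'
        have h3 : (fun t => ∫⁻ z in {y | auxPt t y ∈ Ω}, F (auxPt t z)) =
            fun t => ∫⁻ z, Ω.indicator F (auxPt t z) := by
          funext t
          have hset : MeasurableSet {y | auxPt t y ∈ Ω} := (hmt t).measurable hO.measurableSet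
          rw [← lintegral_indicator hset]
          rfl
        rw [h3]
        exact h2

lemma aux_geom (Ω : Set (EuclideanSpace ℝ (Fin 2))) (hO : IsOpen Ω) (hB : IsBounded Ω)
    (hC : Convex ℝ Ω) (hne : Ω.Nonempty) (hw : 0 < width Ω) (hwD : width Ω ≤ Metric.diam Ω)
    (hl : auxPt (-(Metric.diam Ω / 2)) 0 ∈ closure Ω) (hr : auxPt (Metric.diam Ω / 2) 0 ∈ closure Ω) :
    ∃ c1 c2 : EuclideanSpace ℝ (Fin 2), Metric.closedBall c1 (width Ω / 16) ⊆ Ω ∧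
      Metric.closedBall c2 (width Ω / 16) ⊆ Ω ∧
      Disjoint (Metric.closedBall c1 (width Ω / 16)) (Metric.closedBall c2 (width Ω / 16)) := by
  set w := width Ω with hwdef
  set D := Metric.diam Ω with hD
  have hcoord : ∀ (x : EuclideanSpace ℝ (Fin 2)) (i : Fin 2), |x i| ≤ ‖x‖ := fun x i =>
    PiLp.norm_apply_le x i
  -- a point of large height
  obtain ⟨p, hp, hpk⟩ : ∃ p ∈ Ω, w / 3 < |p 1| := by
    by_contra! hcon
    have hbb : BddBelow (range fun v : Metric.sphere (0 : EuclideanSpace ℝ (Fin 2)) 1 =>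
        (sSup ((fun x => ⟪x, (v : EuclideanSpace ℝ (Fin 2))⟫) '' Ω) -
      sInf ((fun x => ⟪x, (v : EuclideanSpace ℝ (Fin 2))⟫) '' Ω))) := by
      refine ⟨0, ?_⟩
      rintro _ ⟨v, rfl⟩
      have hbd : IsBounded ((fun x => ⟪x, (v : EuclideanSpace ℝ (Fin 2))⟫) '' Ω) := by
        obtain ⟨R, hR⟩ := hB.exists_norm_le
        refine isBounded_iff_forall_norm_le.mpr ⟨R * ‖(v : EuclideanSpace ℝ (Fin 2))‖, ?_⟩
        rintro _ ⟨x, hx, rfl⟩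
        exact (norm_inner_le_norm _ _).trans (by gcongr; exact hR x hx)
      have := Real.sInf_le_sSup _ hbd.bddBelow hbd.bddAbove
      simp only
      linarith
    have h1 : w ≤ _ := ciInf_le hbb (⟨auxPt 0 1, by simp [auxPt, EuclideanSpace.norm_eq]⟩ :
      Metric.sphere (0 : EuclideanSpace ℝ (Fin 2)) 1)
    have hin : ∀ x : EuclideanSpace ℝ (Fin 2), ⟪x, auxPt 0 1⟫ = x 1 := by
      intro x; simp [auxPt, PiLp.inner_apply]
    simp only [hin] at h1
    have h2 : sSup ((fun x : EuclideanSpace ℝ (Fin 2) => x 1) '' Ω) ≤ w / 3 := by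
      refine csSup_le (hne.image _) ?_
      rintro _ ⟨x, hx, rfl⟩
      exact (abs_le.mp (hcon x hx)).2
    have h3 : -(w / 3) ≤ sInf ((fun x : EuclideanSpace ℝ (Fin 2) => x 1) '' Ω) := by
      refine le_csInf (hne.image _) ?_
      rintro _ ⟨x, hx, rfl⟩
      exact (abs_le.mp (hcon x hx)).1
    linarith
  set a := p 0 with ha
  set k := p 1 with hk
  have hDpos : 0 < D := hw.trans_le hwD
  have hk0 : k ≠ 0 := by
    intro h; rw [h, abs_zero] at hpk; linarith
  have hdist : ∀ s : ℝ, auxPt s 0 ∈ closure Ω → |a - s| ≤ D := by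
    intro s hs
    have h1 : dist p (auxPt s 0) ≤ D := by
      rw [hD, ← Metric.diam_closure]
      exact Metric.dist_le_diam_of_mem hB.closure (subset_closure hp) hs
    have h2 := hcoord (p - auxPt s 0) 0
    rw [← dist_eq_norm] at h2
    have h3 : (p - auxPt s 0) 0 = a - s := by simp [auxPt, ha]
    rw [h3] at h2
    exact h2.trans h1
  have ha1 := abs_le.mp (hdist _ hl)
  have ha2 := abs_le.mp (hdist _ hr)
  -- the rectangle
  have hrect : ∀ x : EuclideanSpace ℝ (Fin 2), |x 0 - a / 2| ≤ D / 4 → |x 1 - k / 4| ≤ |k| / 4 →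
      x ∈ closure Ω := by
    intro x hx hy
    set s := x 1 / k with hs
    have hsk : x 1 = s * k := by rw [hs]; field_simp
    have hs4 : |s - 1 / 4| ≤ 1 / 4 := by
      have h1 : x 1 - k / 4 = (s - 1 / 4) * k := by rw [hsk]; ring
      rw [h1, abs_mul] at hy
      have : 0 < |k| := abs_pos.mpr hk0
      by_contra! hcon
      nlinarith
    have hs5 := abs_le.mp hs4
    have hs6 := abs_le.mp hx
    have hb1 : x 0 - s * a ≤ (1 - s) * (D / 2) := by nlinarith
    have hb2 : -((1 - s) * (D / 2)) ≤ x 0 - s * a := by nlinarith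
    have hcl := hC.closure
    have h1s : 0 < 1 - s := by linarith
    set τ := (x 0 - s * a) / ((1 - s) * (D / 2)) with hτ
    have hpos : 0 < (1 - s) * (D / 2) := by positivity
    have hτ1 : τ ≤ 1 := by rw [hτ, div_le_one hpos]; exact hb1
    have hτ2 : -1 ≤ τ := by rw [hτ, le_div_iff₀ hpos]; linarith
    have hτ3 : τ * ((1 - s) * (D / 2)) = x 0 - s * a := by rw [hτ]; field_simp
    have hq : ((1 - τ) / 2) • auxPt (-(D / 2)) 0 + ((1 + τ) / 2) • auxPt (D / 2) 0 ∈ closure Ω :=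
      hcl hl hr (by linarith) (by linarith) (by ring)
    have hq2 := hcl (subset_closure hp) hq (a := s) (b := 1 - s) (by linarith) h1s.le (by ring)
    convert hq2 using 1
    ext i
    fin_cases i
    · simp [auxPt, ← ha]
      linarith
    · simp [auxPt, ← hk, hsk]
  have hintc : interior (closure Ω) = Ω := by
    rw [hC.interior_closure_eq_interior_of_nonempty_interior (by rwa [hO.interior_eq]), hO.interior_eq]
  have hballs : ∀ σ : ℝ, |σ| ≤ w / 8 →
      Metric.closedBall (auxPt (a / 2 + σ) (k / 4)) (w / 16) ⊆ Ω := by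
    intro σ hσ
    refine (Metric.closedBall_subset_ball (show w / 16 < w / 12 by linarith)).trans ?_
    rw [← hintc]
    refine interior_maximal ?_ Metric.isOpen_ball
    intro x hx
    rw [Metric.mem_ball, dist_eq_norm] at hx
    have h0 := (hcoord (x - auxPt (a / 2 + σ) (k / 4)) 0).trans hx.le
    have h1 := (hcoord (x - auxPt (a / 2 + σ) (k / 4)) 1).trans hx.le
    have e0 : (x - auxPt (a / 2 + σ) (k / 4)) 0 = x 0 - a / 2 - σ := by simp [auxPt]; ring
    have e1 : (x - auxPt (a / 2 + σ) (k / 4)) 1 = x 1 - k / 4 := by simp [auxPt]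
    rw [e0] at h0
    rw [e1] at h1
    refine hrect x ?_ ?_
    · have h2 := abs_le.mp h0
      have h3 := abs_le.mp hσ
      rw [abs_le]; constructor <;> linarith
    · linarith
  refine ⟨_, _, hballs (w / 8) (by rw [abs_of_pos (by positivity)]),
    hballs (-(w / 8)) (by rw [abs_neg, abs_of_pos (by positivity)]), ?_⟩
  refine Metric.closedBall_disjoint_closedBall ?_
  have h2 := hcoord (auxPt (a / 2 + w / 8) (k / 4) - auxPt (a / 2 + -(w / 8)) (k / 4)) 0
  rw [← dist_eq_norm] at h2
  have e0 : (auxPt (a / 2 + w / 8) (k / 4) - auxPt (a / 2 + -(w / 8)) (k / 4)) 0 = w / 4 := by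
    simp [auxPt]; ring
  rw [e0, abs_of_pos (by positivity)] at h2
  linarith

lemma aux_bump : ∃ K : ℝ, 0 < K ∧ ∀ (c : EuclideanSpace ℝ (Fin 2)) (r : ℝ), 0 < r →
    ∃ φ : EuclideanSpace ℝ (Fin 2) → ℝ, ContDiff ℝ 1 φ ∧ tsupport φ ⊆ Metric.closedBall c r ∧
      (∀ x ∈ Metric.closedBall c (r / 2), φ x = 1) ∧ ∀ x, ‖fderiv ℝ φ x‖ ≤ K / r := by
  let f : ContDiffBump (0 : EuclideanSpace ℝ (Fin 2)) := ⟨1 / 2, 1, by norm_num, by norm_num⟩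
  have hf : ContDiff ℝ 1 f := f.contDiff
  obtain ⟨K, hK⟩ := (hf.continuous_fderiv one_ne_zero).bounded_above_of_compact_support
    (f.hasCompactSupport.fderiv ℝ)
  refine ⟨|K| + 1, by positivity, fun c r hr => ?_⟩
  refine ⟨fun x => f (r⁻¹ • (x - c)), by fun_prop, ?_, ?_, ?_⟩
  · refine closure_minimal ?_ Metric.isClosed_closedBall
    intro x hx
    rw [Function.mem_support] at hx
    have h1 : r⁻¹ • (x - c) ∈ Metric.ball (0 : EuclideanSpace ℝ (Fin 2)) 1 := by
      have := f.support_eq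
      rw [← this]; exact hx
    rw [mem_ball_zero_iff, norm_smul, norm_inv, Real.norm_eq_abs, abs_of_pos hr,
      inv_mul_lt_iff₀ hr] at h1
    rw [Metric.mem_closedBall, dist_eq_norm]
    linarith
  · intro x hx
    refine f.one_of_mem_closedBall ?_
    rw [Metric.mem_closedBall, dist_eq_norm] at hx
    rw [mem_closedBall_zero_iff, norm_smul, norm_inv, Real.norm_eq_abs, abs_of_pos hr,
      inv_mul_le_iff₀ hr]
    change _ ≤ r * (1 / 2)
    linarith
  · intro x
    have h1 : HasFDerivAt (fun x : EuclideanSpace ℝ (Fin 2) => r⁻¹ • (x - c))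
        (r⁻¹ • ContinuousLinearMap.id ℝ (EuclideanSpace ℝ (Fin 2))) x :=
      ((hasFDerivAt_id x).sub_const c).const_smul r⁻¹
    have h2 : HasFDerivAt f (fderiv ℝ f (r⁻¹ • (x - c))) (r⁻¹ • (x - c)) :=
      (hf.differentiable one_ne_zero _).hasFDerivAt
    have h3 := (h2.comp x h1).fderiv
    change ‖fderiv ℝ (f ∘ fun x => r⁻¹ • (x - c)) x‖ ≤ _
    rw [h3, ContinuousLinearMap.comp_smul, ContinuousLinearMap.comp_id, norm_smul, norm_inv,
      Real.norm_eq_abs, abs_of_pos hr, div_eq_inv_mul]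
    gcongr
    have := hK (r⁻¹ • (x - c))
    have := le_abs_self K
    linarith

lemma aux_test : ∃ C : ℝ, 0 < C ∧ ∀ (Ω : Set (EuclideanSpace ℝ (Fin 2)))
    (c1 c2 : EuclideanSpace ℝ (Fin 2)) (r : ℝ), 0 < r → Metric.closedBall c1 r ⊆ Ω →
    Metric.closedBall c2 r ⊆ Ω → Disjoint (Metric.closedBall c1 r) (Metric.closedBall c2 r) →
    dirEV Ω 2 ≤ ENNReal.ofReal (C / r ^ 2) := by
  obtain ⟨K, hK, hbump⟩ := aux_bump
  refine ⟨16 * K ^ 2, by positivity, fun Ω c1 c2 r hr h1 h2 hdisj => ?_⟩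
  obtain ⟨φ, hφc, hφs, hφ1, hφd⟩ := hbump c1 r hr
  obtain ⟨ψ, hψc, hψs, hψ1, hψd⟩ := hbump c2 r hr
  have hhalf : ∀ c : EuclideanSpace ℝ (Fin 2),
      Metric.closedBall c (r / 2) ⊆ Metric.closedBall c r := fun c =>
    Metric.closedBall_subset_closedBall (by linarith)
  have hφ0 : ∀ x ∈ Metric.closedBall c2 r, φ x = 0 := fun x hx =>
    image_eq_zero_of_notMem_tsupport fun h => hdisj.le_bot ⟨hφs h, hx⟩
  have hψ0 : ∀ x ∈ Metric.closedBall c1 r, ψ x = 0 := fun x hx =>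
    image_eq_zero_of_notMem_tsupport fun h => hdisj.le_bot ⟨hx, hψs h⟩
  have hc1 : c1 ∈ Metric.closedBall c1 (r / 2) := Metric.mem_closedBall_self (by linarith)
  have hc2 : c2 ∈ Metric.closedBall c2 (r / 2) := Metric.mem_closedBall_self (by linarith)
  have hli : LinearIndependent ℝ ![φ, ψ] := by
    rw [LinearIndependent.pair_iff]
    intro a b hab
    have e1 := congrFun hab c1
    have e2 := congrFun hab c2
    simp [hφ1 c1 hc1, hψ0 c1 (hhalf _ hc1)] at e1
    simp [hψ1 c2 hc2, hφ0 c2 (hhalf _ hc2)] at e2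
    exact ⟨e1, e2⟩
  have hrange : range ![φ, ψ] = {φ, ψ} := by simp [Set.pair_comm]
  unfold dirEV
  refine iInf₂_le_of_le (Submodule.span ℝ {φ, ψ}) ⟨?_, ?_⟩ ?_
  · have := finrank_span_eq_card hli
    rw [hrange] at this
    simpa using this
  · intro u hu
    obtain ⟨a, b, rfl⟩ := Submodule.mem_span_pair.mp hu
    refine ⟨(hφc.const_smul a).add (hψc.const_smul b), ?_⟩
    have hsub : tsupport (a • φ + b • ψ) ⊆ Metric.closedBall c1 r ∪ Metric.closedBall c2 r := by
      refine closure_minimal ?_ (Metric.isClosed_closedBall.union Metric.isClosed_closedBall)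
      intro x hx
      by_contra hcon
      rw [mem_union, not_or] at hcon
      have z1 : φ x = 0 := image_eq_zero_of_notMem_tsupport fun h => hcon.1 (hφs h)
      have z2 : ψ x = 0 := image_eq_zero_of_notMem_tsupport fun h => hcon.2 (hψs h)
      exact hx (by simp [z1, z2])
    exact hsub.trans (union_subset h1 h2)
  refine iSup₂_le fun u hu => ?_
  obtain ⟨a, b, rfl⟩ := Submodule.mem_span_pair.mp hu.1
  unfold dRayleigh
  set V := volume (Metric.closedBall (0 : EuclideanSpace ℝ (Fin 2)) 1) with hV
  have hvol : ∀ (c : EuclideanSpace ℝ (Fin 2)) (s : ℝ), 0 < s →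
      volume (Metric.closedBall c s) = ENNReal.ofReal (s ^ 2) * V := by
    intro c s hs
    rw [Measure.addHaar_closedBall' volume c hs.le]
    simp [hV]
  set T := Metric.closedBall c1 r ∪ Metric.closedBall c2 r with hT
  have hTm : MeasurableSet T := measurableSet_closedBall.union measurableSet_closedBall
  have hnum : ∫⁻ x in Ω, ENNReal.ofReal (‖fderiv ℝ (a • φ + b • ψ) x‖ ^ 2) ≤
      ENNReal.ofReal (2 * (a ^ 2 + b ^ 2) * K ^ 2 / r ^ 2) * (ENNReal.ofReal (2 * r ^ 2) * V) := by
    have hd : ∀ x, fderiv ℝ (a • φ + b • ψ) x = a • fderiv ℝ φ x + b • fderiv ℝ ψ x := by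
      intro x
      have d1 := (hφc.differentiable one_ne_zero x)
      have d2 := (hψc.differentiable one_ne_zero x)
      rw [fderiv_add (d1.const_smul a) (d2.const_smul b), fderiv_const_smul d1,
        fderiv_const_smul d2]
    calc _ ≤ ∫⁻ x, ENNReal.ofReal (‖fderiv ℝ (a • φ + b • ψ) x‖ ^ 2) := setLIntegral_le_lintegral _ _
      _ ≤ ∫⁻ x, T.indicator (fun _ => ENNReal.ofReal (2 * (a ^ 2 + b ^ 2) * K ^ 2 / r ^ 2)) x := by
          refine lintegral_mono fun x => ?_
          by_cases hx : x ∈ T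
          · rw [indicator_of_mem hx]
            refine ENNReal.ofReal_le_ofReal ?_
            rw [hd]
            have n1 : ‖a • fderiv ℝ φ x + b • fderiv ℝ ψ x‖ ≤ (|a| + |b|) * (K / r) := by
              refine (norm_add_le _ _).trans ?_
              rw [norm_smul, norm_smul, Real.norm_eq_abs, Real.norm_eq_abs, add_mul]
              gcongr
              · exact hφd x
              · exact hψd x
            calc _ ≤ ((|a| + |b|) * (K / r)) ^ 2 := by gcongr
              _ = (|a| + |b|) ^ 2 * (K ^ 2 / r ^ 2) := by rw [mul_pow, div_pow]
              _ ≤ (2 * (a ^ 2 + b ^ 2)) * (K ^ 2 / r ^ 2) := by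
                  gcongr
                  nlinarith [sq_nonneg (|a| - |b|), sq_abs a, sq_abs b]
              _ = _ := by ring
          · rw [indicator_of_notMem hx]
            rw [hT, mem_union, not_or] at hx
            rw [hd, fderiv_of_notMem_tsupport ℝ (fun h => hx.1 (hφs h)),
              fderiv_of_notMem_tsupport ℝ (fun h => hx.2 (hψs h))]
            simp
      _ = ENNReal.ofReal (2 * (a ^ 2 + b ^ 2) * K ^ 2 / r ^ 2) * volume T := by
          rw [lintegral_indicator hTm, setLIntegral_const]
      _ ≤ _ := by
          gcongr
          refine (measure_union_le _ _).trans ?_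
          rw [hvol _ _ hr, hvol _ _ hr, ← add_mul, ← ENNReal.ofReal_add (by positivity) (by positivity)]
          rw [two_mul]
  have hden : ENNReal.ofReal ((a ^ 2 + b ^ 2) * (r / 2) ^ 2) * V ≤
      ∫⁻ x in Ω, ENNReal.ofReal ((a • φ + b • ψ) x ^ 2) := by
    have hdisj' : Disjoint (Metric.closedBall c1 (r / 2)) (Metric.closedBall c2 (r / 2)) :=
      hdisj.mono (hhalf _) (hhalf _)
    calc _ = ENNReal.ofReal (a ^ 2) * volume (Metric.closedBall c1 (r / 2)) +
          ENNReal.ofReal (b ^ 2) * volume (Metric.closedBall c2 (r / 2)) := by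
          rw [hvol _ _ (by positivity), hvol _ _ (by positivity), ← mul_assoc, ← mul_assoc,
            ← add_mul, ← ENNReal.ofReal_mul (by positivity), ← ENNReal.ofReal_mul (by positivity),
            ← ENNReal.ofReal_add (by positivity) (by positivity), add_mul]
      _ = ∫⁻ x in Metric.closedBall c1 (r / 2) ∪ Metric.closedBall c2 (r / 2),
            ENNReal.ofReal ((a • φ + b • ψ) x ^ 2) := by
          rw [lintegral_union measurableSet_closedBall hdisj', ← setLIntegral_const,
            ← setLIntegral_const]
          congr 1
          · refine setLIntegral_congr_fun measurableSet_closedBall fun x hx => ?_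
            simp [hφ1 x hx, hψ0 x (hhalf _ hx)]
          · refine setLIntegral_congr_fun measurableSet_closedBall fun x hx => ?_
            simp [hψ1 x hx, hφ0 x (hhalf _ hx)]
      _ ≤ _ := lintegral_mono_set
          (union_subset ((hhalf _).trans h1) ((hhalf _).trans h2))
  refine ENNReal.div_le_of_le_mul (hnum.trans ?_)
  refine le_trans (le_of_eq ?_) (mul_le_mul_right hden _)
  rw [← mul_assoc, ← mul_assoc, ← ENNReal.ofReal_mul (by positivity),
    ← ENNReal.ofReal_mul (by positivity)]
  congr 2
  field_simp
  ring

/-- Proposition 5.1 / `p:propsection`: there is a dimensional constant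
`Λ > 0` such that: if `Ω ⊂ ℝ²` is an open bounded convex set with diameter `D`, width
`w ≤ (√3/2) D`, first two Dirichlet eigenfunctions `u₁, u₂`, placed so that the horizontal
segment `(-D/2, D/2) × {0}` is a diameter of `Ω`, and `ω` is a cell of a `u₁²`-weighted `L²`
equipartition of `ū = u₂/u₁` in `Ω` made of `n` cells, then the vertical sections of `ω`
satisfy `sup_{x₁} ℋ¹(ω_{x₁}) ≥ Λ w / n`. -/
theorem cell_section_lower_bound :
    ∃ Λ : ℝ, 0 < Λ ∧
      ∀ Ω : Set (EuclideanSpace ℝ (Fin 2)),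
        IsOpen Ω → IsBounded Ω → Convex ℝ Ω → Ω.Nonempty →
        width Ω ≤ Real.sqrt 3 / 2 * Metric.diam Ω →
        (WithLp.equiv 2 (Fin 2 → ℝ)).symm ![-(Metric.diam Ω / 2), 0] ∈ closure Ω →
        (WithLp.equiv 2 (Fin 2 → ℝ)).symm ![Metric.diam Ω / 2, 0] ∈ closure Ω →
        ∀ u1 u2 : EuclideanSpace ℝ (Fin 2) → ℝ,
          IsFirstDirichletEF Ω u1 → IsSecondDirichletEF Ω u1 u2 →
          ∀ (n : ℕ), 0 < n →
            ∀ c : Fin n → Set (EuclideanSpace ℝ (Fin 2)),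
              IsL2Equipartition Ω (fun x => (u1 x) ^ 2) (fun x => u2 x / u1 x) n c →
              ∀ j : Fin n,
                ENNReal.ofReal (Λ * width Ω / n) ≤
                  ⨆ (t : ℝ) (_ : t ∈ Ioo (-(Metric.diam Ω / 2)) (Metric.diam Ω / 2)),
                    μH[(1 : ℝ)] (c j ∩ {x : EuclideanSpace ℝ (Fin 2) | x 0 = t}) := by
  obtain ⟨C, hC, htest⟩ := aux_test
  set M : ℝ := 1 + 256 * C with hM
  have hMpos : 0 < M := by positivity
  refine ⟨M⁻¹, by positivity, ?_⟩
  intro Ω hO hB hCv hne hwD hl hr u1 u2 hu1 hu2 n hn c hc j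
  have hl' : auxPt (-(Metric.diam Ω / 2)) 0 ∈ closure Ω := hl
  have hr' : auxPt (Metric.diam Ω / 2) 0 ∈ closure Ω := hr
  set w := width Ω with hw
  set D := Metric.diam Ω with hD
  set H : ℝ≥0∞ := ⨆ (t : ℝ) (_ : t ∈ Ioo (-(D / 2)) (D / 2)),
    μH[(1 : ℝ)] (c j ∩ {x : EuclideanSpace ℝ (Fin 2) | x 0 = t}) with hH
  by_cases hwpos : 0 < w
  swap
  · rw [ENNReal.ofReal_of_nonpos]
    · exact zero_le
    · have h1 : w ≤ 0 := not_lt.mp hwpos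
      have h2 : M⁻¹ * w ≤ 0 := mul_nonpos_of_nonneg_of_nonpos (by positivity) h1
      exact div_nonpos_of_nonpos_of_nonneg h2 (by positivity)
  have hD0 : 0 ≤ D := Metric.diam_nonneg
  have hwD' : w ≤ D := by
    have h3 : Real.sqrt 3 ≤ 2 := by
      rw [Real.sqrt_le_left (by norm_num)]; norm_num
    nlinarith
  obtain ⟨c1, c2, hb1, hb2, hdis⟩ := aux_geom Ω hO hB hCv hne hwpos hwD' hl' hr'
  have hev := htest Ω c1 c2 (w / 16) (by positivity) hb1 hb2 hdis
  obtain ⟨hcells, -, -, hint⟩ := hc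
  obtain ⟨-, hcO, hcsub⟩ := hcells j
  obtain ⟨hcont, hz, hdiff, -, -, hnorm, hray⟩ := hu2
  have hu1pos := hu1.2.2.2.2.1
  -- the slices
  have hslice : ∀ t, volume {y | auxPt t y ∈ c j} ≤ H := by
    intro t
    by_cases ht : t ∈ Ioo (-(D / 2)) (D / 2)
    · exact (aux_slice (c j) t).trans (le_iSup₂_of_le t ht le_rfl)
    · have hsub : {y | auxPt t y ∈ c j} ⊆ {0} := by
        intro y hy
        have hd : ∀ s, auxPt s 0 ∈ closure Ω → (t - s) ^ 2 + y ^ 2 ≤ D ^ 2 := by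
          intro s hs
          have h1 : dist (auxPt t y) (auxPt s 0) ≤ D := by
            rw [hD, ← Metric.diam_closure]
            exact Metric.dist_le_diam_of_mem hB.closure (subset_closure (hcsub hy)) hs
          rw [EuclideanSpace.dist_eq, Real.sqrt_le_left hD0] at h1
          simpa [auxPt, Real.dist_eq, sq_abs] using h1
        have e1 := hd _ hl'
        have e2 := hd _ hr'
        have : y ^ 2 ≤ 0 := by
          rw [mem_Ioo, not_and_or, not_lt, not_lt] at ht
          rcases ht with ht | ht <;> nlinarith
        exact pow_eq_zero_iff (two_ne_zero) |>.mp (le_antisymm this (sq_nonneg y))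
      calc _ ≤ volume ({0} : Set ℝ) := measure_mono hsub
        _ = 0 := by simp
        _ ≤ _ := zero_le
  -- the mass of the cell
  have hmass : ∫⁻ x in c j, ENNReal.ofReal (u2 x ^ 2) = 1 / n := by
    have hpt : ∀ x ∈ Ω, ENNReal.ofReal ((u2 x / u1 x) ^ 2 * u1 x ^ 2) = ENNReal.ofReal (u2 x ^ 2) := by
      intro x hx
      have := (hu1pos x hx).ne'
      congr 1
      field_simp
    have h1 := (hint j).2
    simp only at h1
    rw [setLIntegral_congr_fun hcO.measurableSet (fun x hx => hpt x (hcsub hx)),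
      setLIntegral_congr_fun hO.measurableSet hpt, hnorm] at h1
    exact h1
  have hmain := aux_main Ω (c j) hO hB hcO.measurableSet u2 hcont hz hdiff H hslice w⁻¹
    (by positivity)
  have hE : ∫⁻ x in Ω, ENNReal.ofReal (‖fderiv ℝ u2 x‖ ^ 2) = dirEV Ω 2 := by
    rw [← hray, dRayleigh, hnorm, div_one]
  rw [hmass, hnorm, hE, mul_one, inv_inv] at hmain
  have hfin : (1 : ℝ≥0∞) / n ≤ H * ENNReal.ofReal (M / w) := by
    refine hmain.trans ?_
    gcongr
    calc _ ≤ ENNReal.ofReal w⁻¹ + ENNReal.ofReal w * ENNReal.ofReal (C / (w / 16) ^ 2) := by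
          gcongr
      _ = ENNReal.ofReal (M / w) := by
          rw [← ENNReal.ofReal_mul hwpos.le, ← ENNReal.ofReal_add (by positivity) (by positivity)]
          congr 1
          rw [hM]
          field_simp
          ring
  have hn' : (0 : ℝ) < n := by exact_mod_cast hn
  calc ENNReal.ofReal (M⁻¹ * w / n) = (1 / n) * ENNReal.ofReal (w / M) := by
        rw [← ENNReal.ofReal_natCast, ← ENNReal.ofReal_one, ← ENNReal.ofReal_div_of_pos hn',
          ← ENNReal.ofReal_mul (by positivity)]
        congr 1
        field_simp
    _ ≤ H * ENNReal.ofReal (M / w) * ENNReal.ofReal (w / M) := by gcongr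
    _ = H := by
        rw [mul_assoc, ← ENNReal.ofReal_mul (by positivity)]
        have : M / w * (w / M) = 1 := by field_simp
        rw [this, ENNReal.ofReal_one, mul_one]
end
end
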